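/- arXiv:math/0504455 — 4 statements merged into one kernel-verified Lean document; each statement's English description precedes it below -/
import Mathlib

section
/- Let c, M, T > 0 and x₀ < x₁. Let u : [x₀,x₁] × [0,T] → ℝ be infinitely differentiable, satisfying the heat equation u_t = u_{xx}/(4c) pointwise and |u(x,t)| < M everywhere. Then for every x ∈ (x₀,x₁) and every t ∈ (0,T], setting d = min(x − x₀, x₁ − x) and N = M / erf(√c · d/(2√t)), one has for every z ∈ ℝ with erf(z) = u(x,t)/N the gradient bound u_x(x,t) ≤ 2N · √(c/(πt)) · exp(−z²). -/
/-- The error function `erf s = (2/√π) ∫₀ˢ exp(−y²) dy`. -/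
noncomputable def erf (s : ℝ) : ℝ :=
  (2 / Real.sqrt Real.pi) * ∫ y in (0:ℝ)..s, Real.exp (-(y ^ 2))

open Set Filter Topology

theorem hasDerivAt_erf (s : ℝ) :
    HasDerivAt erf (2 / Real.sqrt Real.pi * Real.exp (-(s ^ 2))) s := by
  have hcont : Continuous fun y : ℝ => Real.exp (-(y ^ 2)) := by fun_prop
  exact (hcont.integral_hasStrictDerivAt 0 s).hasDerivAt.const_mul _

theorem erf_strictMono : StrictMono erf :=
  strictMono_of_hasDerivAt_pos hasDerivAt_erf fun s => by positivity

theorem erf_zero : erf 0 = 0 := by simp [erf]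

theorem erf_neg (s : ℝ) : erf (-s) = -erf s := by
  have h := intervalIntegral.integral_comp_neg (a := 0) (b := s)
    (fun y : ℝ => Real.exp (-(y ^ 2)))
  simp only [neg_sq, neg_zero] at h
  rw [erf, erf, h, intervalIntegral.integral_symm]
  ring

/-- The second derivative is nonpositive at a local maximum. -/
theorem IsLocalMax.second_deriv_nonpos {f f' : ℝ → ℝ} {f'' x : ℝ} (hmax : IsLocalMax f x)
    (hf : ∀ᶠ y in 𝓝 x, HasDerivAt f (f' y) y) (hf' : HasDerivAt f' f'' x) : f'' ≤ 0 := by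
  by_contra! hpos
  have hderiv : deriv f =ᶠ[𝓝 x] f' := hf.mono fun y hy => hy.deriv
  have hsecond : deriv (deriv f) x = f'' := hderiv.deriv_eq.trans hf'.deriv
  have hmin : IsLocalMin f x :=
    isLocalMin_of_deriv_deriv_pos (by rw [hsecond]; exact hpos) hmax.deriv_eq_zero
      hf.self_of_nhds.continuousAt
  have hconst : f =ᶠ[𝓝 x] fun _ => f x := by
    filter_upwards [hmax, hmin] with y h₁ h₂ using le_antisymm h₁ h₂
  have hzero : deriv f =ᶠ[𝓝 x] fun _ => 0 := by
    simpa using hconst.deriv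
  rw [← hsecond, hzero.deriv_eq] at hpos
  simp at hpos

/-- The second derivative is nonnegative at a local minimum. -/
theorem IsLocalMin.second_deriv_nonneg {f f' : ℝ → ℝ} {f'' x : ℝ} (hmin : IsLocalMin f x)
    (hf : ∀ᶠ y in 𝓝 x, HasDerivAt f (f' y) y) (hf' : HasDerivAt f' f'' x) : 0 ≤ f'' := by
  have h := IsLocalMax.second_deriv_nonpos (IsLocalMin.neg hmin) (hf.mono fun y hy => hy.fun_neg)
    hf'.fun_neg
  linarith

/-- The left derivative is nonnegative at a point that is maximal among nearby points to its
left. -/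
theorem HasDerivWithinAt.nonneg_of_left_max {h : ℝ → ℝ} {h' δ s : ℝ} (hδ : δ < s)
    (hd : HasDerivWithinAt h h' (Icc δ s) s) (hmax : ∀ᶠ r in 𝓝[Icc δ s] s, h r ≤ h s) :
    0 ≤ h' := by
  have hd' : HasDerivWithinAt h h' (Iio s) s :=
    (hd.mono Ico_subset_Icc_self).mono_of_mem_nhdsWithin (Ico_mem_nhdsLT hδ)
  have hmax' : ∀ᶠ r in 𝓝[<] s, h r ≤ h s := by
    have := hmax.filter_mono (nhdsWithin_mono s (Ico_subset_Icc_self : Ico δ s ⊆ Icc δ s))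
    rwa [nhdsWithin_Ico_eq_nhdsLT hδ] at this
  rw [hasDerivWithinAt_iff_tendsto_slope' (by simp)] at hd'
  refine ge_of_tendsto hd' ?_
  filter_upwards [hmax', self_mem_nhdsWithin] with r hr hrs
  rw [slope_def_field]
  exact div_nonneg_of_nonpos (by linarith) (by simpa using (mem_Iio.1 hrs).le)

/-- A solution of the heat equation `w_t = κ w_{xx}` that is negative on the left side of a strip
and positive on the right side, and whose initial data does not change sign from positive to
negative, never changes sign from positive to negative. The initial condition is expressed by the
decay of `w(p, s) w(q, s)` as `s → 0` over the pairs `p < q` violating the sign pattern. -/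
theorem heat_sign_pattern {κ x₀ x₁ t : ℝ} (hκ : 0 < κ) (ht : 0 < t) {w wt wx wxx : ℝ → ℝ → ℝ}
    (hcont : ContinuousOn (fun z : ℝ × ℝ => w z.1 z.2) (Icc x₀ x₁ ×ˢ Ioc 0 t))
    (hwt : ∀ x ∈ Ioo x₀ x₁, ∀ s ∈ Ioc 0 t,
      HasDerivWithinAt (fun r => w x r) (wt x s) (Ioc 0 t) s)
    (hwx : ∀ x ∈ Ioo x₀ x₁, ∀ s ∈ Ioc 0 t, HasDerivAt (fun y => w y s) (wx x s) x)
    (hwxx : ∀ x ∈ Ioo x₀ x₁, ∀ s ∈ Ioc 0 t, HasDerivAt (fun y => wx y s) (wxx x s) x)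
    (hpde : ∀ x ∈ Ioo x₀ x₁, ∀ s ∈ Ioc 0 t, wt x s = κ * wxx x s)
    (hleft : ∀ s ∈ Ioc 0 t, w x₀ s < 0) (hright : ∀ s ∈ Ioc 0 t, 0 < w x₁ s)
    (hinit : ∀ ε > 0, ∃ δ > 0, ∀ s ∈ Ioc 0 t, s ≤ δ → ∀ p ∈ Icc x₀ x₁, ∀ q ∈ Icc x₀ x₁,
      p < q → 0 < w p s → w q s < 0 → w p s * -w q s < ε)
    {p q : ℝ} (hp : p ∈ Icc x₀ x₁) (hq : q ∈ Icc x₀ x₁) (hpq : p < q) (hwp : 0 < w p t) :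
    0 ≤ w q t := by
  by_contra! hwq
  set F : ℝ × ℝ × ℝ → ℝ := fun z =>
    max (w z.1 z.2.2) 0 * max (-w z.2.1 z.2.2) 0 * Real.exp (-z.2.2) with hF
  have hstart : 0 < w p t * -w q t * Real.exp (-t) := by
    have : 0 < -w q t := by linarith
    positivity
  obtain ⟨δ₀, hδ₀, hsmall⟩ := hinit _ hstart
  set δ := min δ₀ t with hδdef
  have hδ : 0 < δ := lt_min hδ₀ ht
  have hδt : δ ≤ t := min_le_right _ _
  set K : Set (ℝ × ℝ × ℝ) :=
    (Icc x₀ x₁ ×ˢ Icc x₀ x₁ ×ˢ Icc δ t) ∩ {z | z.1 ≤ z.2.1} with hK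
  have hKcompact : IsCompact K :=
    (isCompact_Icc.prod (isCompact_Icc.prod isCompact_Icc)).inter_right
      (isClosed_le (by fun_prop) (by fun_prop))
  have hFcont : ContinuousOn F K := by
    have h₁ : ContinuousOn (fun z : ℝ × ℝ × ℝ => w z.1 z.2.2) K :=
      hcont.comp (f := fun z : ℝ × ℝ × ℝ => (z.1, z.2.2)) (by fun_prop) fun z hz =>
        ⟨hz.1.1, hδ.trans_le hz.1.2.2.1, hz.1.2.2.2⟩
    have h₂ : ContinuousOn (fun z : ℝ × ℝ × ℝ => w z.2.1 z.2.2) K :=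
      hcont.comp (f := fun z : ℝ × ℝ × ℝ => (z.2.1, z.2.2)) (by fun_prop) fun z hz =>
        ⟨hz.1.2.1, hδ.trans_le hz.1.2.2.1, hz.1.2.2.2⟩
    exact ((h₁.sup continuousOn_const).mul (h₂.neg.sup continuousOn_const)).mul (by fun_prop)
  have hmemK : (p, q, t) ∈ K := ⟨⟨hp, hq, hδt, le_rfl⟩, hpq.le⟩
  obtain ⟨⟨P, Q, s⟩, ⟨⟨hP, hQ, hs⟩, hPQ⟩, hmax⟩ := hKcompact.exists_isMaxOn ⟨_, hmemK⟩ hFcont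
  have hmax' : ∀ P' ∈ Icc x₀ x₁, ∀ Q' ∈ Icc x₀ x₁, ∀ s' ∈ Icc δ t, P' ≤ Q' →
      F (P', Q', s') ≤ F (P, Q, s) := fun P' h₁ Q' h₂ s' h₃ h₄ =>
    hmax (show (P', Q', s') ∈ K from ⟨⟨h₁, h₂, h₃⟩, h₄⟩)
  replace hPQ : P ≤ Q := hPQ
  replace hP : P ∈ Icc x₀ x₁ := hP
  replace hQ : Q ∈ Icc x₀ x₁ := hQ
  replace hs : s ∈ Icc δ t := hs
  have hFpq : F (p, q, t) = w p t * -w q t * Real.exp (-t) := by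
    simp only [hF]
    rw [max_eq_left hwp.le, max_eq_left (by linarith)]
  have hge : w p t * -w q t * Real.exp (-t) ≤ F (P, Q, s) :=
    hFpq ▸ hmax' p hp q hq t ⟨hδt, le_rfl⟩ hpq.le
  have hFpos : 0 < F (P, Q, s) := hstart.trans_le hge
  have hwP : 0 < w P s := by
    by_contra! h
    simp [hF, max_eq_right h] at hFpos
  have hwQ : w Q s < 0 := by
    by_contra! h
    simp [hF, max_eq_right (neg_nonpos.2 h)] at hFpos
  have hFPQ : F (P, Q, s) = w P s * -w Q s * Real.exp (-s) := by
    simp only [hF]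
    rw [max_eq_left hwP.le, max_eq_left (by linarith)]
  have hs₀ : s ∈ Ioc 0 t := ⟨hδ.trans_le hs.1, hs.2⟩
  have hlt : P < Q := hPQ.lt_of_ne (by rintro rfl; linarith)
  have hx₀P : x₀ < P := hP.1.lt_of_ne (by rintro rfl; linarith [hleft s hs₀])
  have hQx₁ : Q < x₁ := hQ.2.lt_of_ne (by rintro rfl; linarith [hright s hs₀])
  have hP' : P ∈ Ioo x₀ x₁ := ⟨hx₀P, hlt.trans hQx₁⟩
  have hQ' : Q ∈ Ioo x₀ x₁ := ⟨hx₀P.trans hlt, hQx₁⟩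
  have hδs : δ < s := by
    by_contra! h
    have h₁ := hsmall s hs₀ (h.trans (min_le_left _ _)) P hP Q hQ hlt hwP hwQ
    have h₂ : Real.exp (-s) ≤ 1 := Real.exp_le_one_iff.2 (by linarith [hs₀.1])
    have h₃ : 0 < w P s * -w Q s := mul_pos hwP (by linarith)
    rw [hFPQ] at hge
    nlinarith
  have hexp := Real.exp_pos (-s)
  have hmaxP : IsLocalMax (fun y => w y s) P := by
    filter_upwards [Ioo_mem_nhds hx₀P hlt] with y hy
    have h := hmax' y ⟨hy.1.le, (hy.2.trans hQx₁).le⟩ Q hQ s hs hy.2.le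
    rw [hFPQ] at h
    simp only [hF] at h
    rw [max_eq_left (show 0 ≤ -w Q s by linarith)] at h
    have h' := le_of_mul_le_mul_right h hexp
    exact (le_max_left _ _).trans (le_of_mul_le_mul_right h' (by linarith))
  have hminQ : IsLocalMin (fun y => w y s) Q := by
    filter_upwards [Ioo_mem_nhds hlt hQx₁] with y hy
    have h := hmax' P hP y ⟨(hx₀P.trans hy.1).le, hy.2.le⟩ s hs hy.1.le
    rw [hFPQ] at h
    simp only [hF] at h
    rw [max_eq_left hwP.le] at h
    have h' := le_of_mul_le_mul_left (le_of_mul_le_mul_right h hexp) hwP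
    linarith [le_max_left (-w y s) 0]
  have hPt : wt P s ≤ 0 := by
    rw [hpde P hP' s hs₀]
    exact mul_nonpos_of_nonneg_of_nonpos hκ.le <| hmaxP.second_deriv_nonpos
      (eventually_of_mem (Ioo_mem_nhds hP'.1 hP'.2) fun y hy => hwx y hy s hs₀) (hwxx P hP' s hs₀)
  have hQt : 0 ≤ wt Q s := by
    rw [hpde Q hQ' s hs₀]
    exact mul_nonneg hκ.le <| hminQ.second_deriv_nonneg
      (eventually_of_mem (Ioo_mem_nhds hQ'.1 hQ'.2) fun y hy => hwx y hy s hs₀) (hwxx Q hQ' s hs₀)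
  have hsub : Icc δ s ⊆ Ioc 0 t := fun r hr => ⟨hδ.trans_le hr.1, hr.2.trans hs.2⟩
  have hdP := (hwt P hP' s hs₀).mono hsub
  have hdQ := (hwt Q hQ' s hs₀).mono hsub
  have hdexp : HasDerivWithinAt (fun r : ℝ => Real.exp (-r)) (-Real.exp (-s)) (Icc δ s) s := by
    simpa using ((hasDerivAt_id s).neg.exp).hasDerivWithinAt
  have hd := (hdP.fun_mul hdQ.fun_neg).fun_mul hdexp
  have hnonneg := hd.nonneg_of_left_max hδs <| by
    filter_upwards [hdP.continuousWithinAt.eventually (lt_mem_nhds hwP),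
      hdQ.continuousWithinAt.eventually (gt_mem_nhds hwQ), self_mem_nhdsWithin] with r h₁ h₂ hr
    have h := hmax' P hP Q hQ r ⟨hr.1, hr.2.trans hs.2⟩ hlt.le
    rw [hFPQ] at h
    simp only [hF] at h
    rwa [max_eq_left h₁.le, max_eq_left (by linarith)] at h
  have h₁ : wt P s * -w Q s ≤ 0 := mul_nonpos_of_nonpos_of_nonneg hPt (by linarith)
  have h₂ : w P s * -wt Q s ≤ 0 := mul_nonpos_of_nonneg_of_nonpos hwP.le (by linarith)
  have h₃ : 0 < w P s * -w Q s := mul_pos hwP (by linarith)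
  nlinarith

/-- A function with a negative derivative at a zero is positive somewhere on the left and negative
somewhere on the right of it, in any neighbourhood. -/
theorem HasDerivAt.exists_sign_change_of_neg {f : ℝ → ℝ} {f' x a b : ℝ} (hf : HasDerivAt f f' x)
    (hx : f x = 0) (hf' : f' < 0) (hax : a < x) (hxb : x < b) :
    ∃ p ∈ Ioo a x, ∃ q ∈ Ioo x b, 0 < f p ∧ f q < 0 := by
  have hslope := hasDerivAt_iff_tendsto_slope.1 hf |>.eventually (gt_mem_nhds hf')
  have hl : ∀ᶠ y in 𝓝[<] x, slope f x y < 0 :=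
    hslope.filter_mono (nhdsWithin_mono x fun y hy => (mem_Iio.1 hy).ne)
  have hr : ∀ᶠ y in 𝓝[>] x, slope f x y < 0 :=
    hslope.filter_mono (nhdsWithin_mono x fun y hy => (mem_Ioi.1 hy).ne')
  obtain ⟨p, hp, hpm⟩ := (hl.and (Ioo_mem_nhdsLT hax)).exists
  obtain ⟨q, hq, hqm⟩ := (hr.and (Ioo_mem_nhdsGT hxb)).exists
  refine ⟨p, hpm, q, hqm, ?_, ?_⟩
  · rw [slope_def_field, hx, sub_zero] at hp
    by_contra! h
    exact hp.not_ge (div_nonneg_of_nonpos h (by linarith [hpm.2]))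
  · rw [slope_def_field, hx, sub_zero] at hq
    by_contra! h
    exact hq.not_ge (div_nonneg h (by linarith [hqm.1]))

/-- The solution `N erf(√c (y - a) / √s)` of `u_t = u_{xx}/(4c)` with initial data
`N sign(y - a)`. -/
noncomputable def erfProfile (c N a y s : ℝ) : ℝ :=
  N * erf (Real.sqrt c * (y - a) / Real.sqrt s)

/-- The space derivative of `erfProfile`. -/
noncomputable def erfProfileX (c N a y s : ℝ) : ℝ :=
  N * (2 / Real.sqrt Real.pi * Real.exp (-((Real.sqrt c * (y - a) / Real.sqrt s) ^ 2))
    * (Real.sqrt c / Real.sqrt s))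

/-- The second space derivative of `erfProfile`. -/
noncomputable def erfProfileXX (c N a y s : ℝ) : ℝ :=
  erfProfileX c N a y s
    * (-(2 * (Real.sqrt c * (y - a) / Real.sqrt s) * (Real.sqrt c / Real.sqrt s)))

theorem hasDerivAt_erfProfile_arg (c a y s : ℝ) :
    HasDerivAt (fun y => Real.sqrt c * (y - a) / Real.sqrt s) (Real.sqrt c / Real.sqrt s) y := by
  simpa using (((hasDerivAt_id y).sub_const a).const_mul (Real.sqrt c)).div_const (Real.sqrt s)

theorem hasDerivAt_erfProfile (c N a y s : ℝ) :
    HasDerivAt (fun y => erfProfile c N a y s) (erfProfileX c N a y s) y :=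
  ((hasDerivAt_erf _).comp y (hasDerivAt_erfProfile_arg c a y s)).const_mul N

theorem hasDerivAt_erfProfileX (c N a y s : ℝ) :
    HasDerivAt (fun y => erfProfileX c N a y s) (erfProfileXX c N a y s) y := by
  have h := ((((hasDerivAt_erfProfile_arg c a y s).fun_pow 2).fun_neg.exp.const_mul
    (2 / Real.sqrt Real.pi)).mul_const (Real.sqrt c / Real.sqrt s)).const_mul N
  refine h.congr_deriv ?_
  simp only [erfProfileXX, erfProfileX]
  push_cast
  ring

theorem continuousOn_erfProfile (c N a : ℝ) :
    ContinuousOn (fun z : ℝ × ℝ => erfProfile c N a z.1 z.2) {z | 0 < z.2} := by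
  have herf : Continuous erf :=
    continuous_iff_continuousAt.2 fun s => (hasDerivAt_erf s).continuousAt
  exact continuousOn_const.mul (herf.comp_continuousOn (ContinuousOn.div (by fun_prop)
    (by fun_prop) fun z hz => (Real.sqrt_pos.2 hz).ne'))

theorem hasDerivAt_erfProfile_time {c : ℝ} (hc : 0 < c) (N a y : ℝ) {s : ℝ} (hs : 0 < s) :
    HasDerivAt (fun r => erfProfile c N a y r) (erfProfileXX c N a y s / (4 * c)) s := by
  have h₁ : HasDerivAt (fun r => Real.sqrt c * (y - a) / Real.sqrt r)
      (-(Real.sqrt c * (y - a)) * (1 / (2 * Real.sqrt s)) / Real.sqrt s ^ 2) s := by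
    refine ((hasDerivAt_const s (Real.sqrt c * (y - a))).fun_div
      (Real.hasDerivAt_sqrt hs.ne') (Real.sqrt_pos.2 hs).ne').congr_deriv ?_
    ring
  refine (((hasDerivAt_erf _).comp s h₁).const_mul N).congr_deriv ?_
  have hs' := Real.sqrt_pos.2 hs
  have hc' := Real.sqrt_pos.2 hc
  have hcc := Real.sq_sqrt hc.le
  have hpi := Real.sqrt_pos.2 Real.pi_pos
  simp only [erfProfileXX, erfProfileX]
  generalize Real.exp _ = E
  nth_rewrite 5 [← hcc]
  field_simp
  ring

/-- Gradient estimate, found by counting intersections, for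
bounded solutions of the heat equation `u_t = u_{xx}/(4c)` on an interval. -/
theorem heat_equation_gradient_estimate
    (c M T x₀ x₁ : ℝ) (hc : 0 < c) (hM : 0 < M) (hT : 0 < T) (hx : x₀ < x₁)
    (u ut ux uxx : ℝ → ℝ → ℝ)
    (hu_smooth : ContDiffOn ℝ (⊤ : ℕ∞) (fun z : ℝ × ℝ => u z.1 z.2)
      (Set.Icc x₀ x₁ ×ˢ Set.Icc 0 T))
    (hut : ∀ x ∈ Set.Icc x₀ x₁, ∀ t ∈ Set.Icc (0:ℝ) T,
      HasDerivWithinAt (fun s => u x s) (ut x t) (Set.Icc 0 T) t)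
    (hux : ∀ x ∈ Set.Icc x₀ x₁, ∀ t ∈ Set.Icc (0:ℝ) T,
      HasDerivWithinAt (fun y => u y t) (ux x t) (Set.Icc x₀ x₁) x)
    (huxx : ∀ x ∈ Set.Icc x₀ x₁, ∀ t ∈ Set.Icc (0:ℝ) T,
      HasDerivWithinAt (fun y => ux y t) (uxx x t) (Set.Icc x₀ x₁) x)
    (hpde : ∀ x ∈ Set.Icc x₀ x₁, ∀ t ∈ Set.Icc (0:ℝ) T,
      ut x t = uxx x t / (4 * c))
    (hbdd : ∀ x ∈ Set.Icc x₀ x₁, ∀ t ∈ Set.Icc (0:ℝ) T, |u x t| < M) :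
    ∀ x ∈ Set.Ioo x₀ x₁, ∀ t ∈ Set.Ioc (0:ℝ) T,
      ∀ z : ℝ,
        erf z = u x t /
          (M / erf (Real.sqrt c * min (x - x₀) (x₁ - x) / (2 * Real.sqrt t))) →
        ux x t ≤
          2 * (M / erf (Real.sqrt c * min (x - x₀) (x₁ - x) / (2 * Real.sqrt t)))
            * Real.sqrt (c / (Real.pi * t)) * Real.exp (-z ^ 2) := by
  intro x hxm t ht z hz
  set d := min (x - x₀) (x₁ - x) with hd
  set k := Real.sqrt c * d / (2 * Real.sqrt t) with hk
  have hd_pos : 0 < d := lt_min (by linarith [hxm.1]) (by linarith [hxm.2])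
  have hsc : 0 < Real.sqrt c := Real.sqrt_pos.2 hc
  have hst : 0 < Real.sqrt t := Real.sqrt_pos.2 ht.1
  have hk_pos : 0 < k := by positivity
  have herfk : 0 < erf k := erf_zero ▸ erf_strictMono hk_pos
  set N := M / erf k with hN
  have hN_pos : 0 < N := div_pos hM herfk
  have hNk : N * erf k = M := div_mul_cancel₀ M herfk.ne'
  have hNneg : N * erf (-k) = -M := by rw [erf_neg, mul_neg, hNk]
  have hNz : N * erf z = u x t := by rw [hz, mul_div_cancel₀ _ hN_pos.ne']
  have htT : t ∈ Icc 0 T := ⟨ht.1.le, ht.2⟩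
  have hxI : x ∈ Icc x₀ x₁ := ⟨hxm.1.le, hxm.2.le⟩
  have hsub : Ioc 0 t ⊆ Icc 0 T := fun s hs => ⟨hs.1.le, hs.2.trans ht.2⟩
  have hux_lt := abs_lt.1 (hbdd x hxI t htT)
  have hzk : z < k := erf_strictMono.lt_iff_lt.1 <| lt_of_mul_lt_mul_left
    (by rw [hNz, hNk]; exact hux_lt.2) hN_pos.le
  have hkz : -k < z := erf_strictMono.lt_iff_lt.1 <| lt_of_mul_lt_mul_left
    (by rw [hNz, hNneg]; exact hux_lt.1) hN_pos.le
  set a := x - z * Real.sqrt t / Real.sqrt c with ha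
  have hkd : k * Real.sqrt t / Real.sqrt c = d / 2 := by
    rw [hk]; field_simp
  have hax : a - x < d / 2 := by
    have : -k * Real.sqrt t / Real.sqrt c < z * Real.sqrt t / Real.sqrt c := by gcongr
    rw [neg_mul, neg_div, hkd] at this
    linarith
  have hxa : x - a < d / 2 := by
    have : z * Real.sqrt t / Real.sqrt c < k * Real.sqrt t / Real.sqrt c := by gcongr
    linarith
  have hargx : Real.sqrt c * (x - a) / Real.sqrt t = z := by
    rw [ha]; field_simp; ring
  -- The profile dominates `u` to the right of `a` and is dominated by `u` to the left of it.
  have hge : ∀ y s, 0 < s → k * Real.sqrt s ≤ Real.sqrt c * (y - a) →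
      M ≤ erfProfile c N a y s := fun y s hs h => by
    rw [← hNk]
    exact mul_le_mul_of_nonneg_left
      (erf_strictMono.monotone ((le_div_iff₀ (Real.sqrt_pos.2 hs)).2 h)) hN_pos.le
  have hle : ∀ y s, 0 < s → k * Real.sqrt s ≤ Real.sqrt c * (a - y) →
      erfProfile c N a y s ≤ -M := fun y s hs h => by
    rw [← hNneg]
    exact mul_le_mul_of_nonneg_left
      (erf_strictMono.monotone ((div_le_iff₀ (Real.sqrt_pos.2 hs)).2 (by linarith))) hN_pos.le
  have hlat : ∀ s ∈ Ioc 0 t, k * Real.sqrt s ≤ Real.sqrt c * (d / 2) := fun s hs => by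
    calc k * Real.sqrt s ≤ k * Real.sqrt t := by gcongr; exact hs.2
      _ = Real.sqrt c * (d / 2) := by rw [← hkd]; field_simp
  have hucont := hu_smooth.continuousOn
  have hIx {y : ℝ} (hy : y ∈ Ioo x₀ x₁) : Icc x₀ x₁ ∈ 𝓝 y := Icc_mem_nhds hy.1 hy.2
  have hinit : ∀ ε > 0, ∃ δ > 0, ∀ s ∈ Ioc 0 t, s ≤ δ → ∀ p ∈ Icc x₀ x₁, ∀ q ∈ Icc x₀ x₁,
      p < q → 0 < erfProfile c N a p s - u p s → erfProfile c N a q s - u q s < 0 →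
      (erfProfile c N a p s - u p s) * -(erfProfile c N a q s - u q s) < ε := by
    intro ε hε
    obtain ⟨η, hη, hunif⟩ := Metric.uniformContinuousOn_iff.1
      ((isCompact_Icc.prod isCompact_Icc).uniformContinuousOn_of_continuous hucont)
      (Real.sqrt ε) (Real.sqrt_pos.2 hε)
    refine ⟨(Real.sqrt c * (η / 2) / k) ^ 2, by positivity, ?_⟩
    intro s hs hsδ p hp q hq hpq hwp hwq
    have hroot : k * Real.sqrt s ≤ Real.sqrt c * (η / 2) := by
      have h := Real.sqrt_le_sqrt hsδ
      rw [Real.sqrt_sq (by positivity), le_div_iff₀ hk_pos] at h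
      linarith
    have hup := abs_lt.1 (hbdd p hp s (hsub hs))
    have huq := abs_lt.1 (hbdd q hq s (hsub hs))
    have hpa : a - p < η / 2 := by
      by_contra! h
      linarith [hle p s hs.1 (hroot.trans (by gcongr))]
    have hqa : q - a < η / 2 := by
      by_contra! h
      linarith [hge q s hs.1 (hroot.trans (by gcongr))]
    have hdist : dist (p, s) (q, s) < η := by
      rw [Prod.dist_eq, dist_self, max_eq_left dist_nonneg, Real.dist_eq, abs_lt]
      constructor <;> linarith
    have hdiff := abs_lt.1 (hunif (p, s) ⟨hp, hsub hs⟩ (q, s) ⟨hq, hsub hs⟩ hdist)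
    simp only at hdiff
    have hmono : erfProfile c N a p s ≤ erfProfile c N a q s :=
      mul_le_mul_of_nonneg_left (erf_strictMono.monotone (by gcongr)) hN_pos.le
    rw [← Real.mul_self_sqrt hε.le]
    exact mul_lt_mul'' (by linarith) (by linarith) hwp.le (by linarith)
  have hpattern := fun p hp q hq => heat_sign_pattern (κ := 1 / (4 * c)) (x₀ := x₀) (x₁ := x₁)
    (t := t) (w := fun y s => erfProfile c N a y s - u y s)
    (wt := fun y s => erfProfileXX c N a y s / (4 * c) - ut y s)
    (wx := fun y s => erfProfileX c N a y s - ux y s)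
    (wxx := fun y s => erfProfileXX c N a y s - uxx y s) (by positivity) ht.1
    (((continuousOn_erfProfile c N a).mono fun z hz => hz.2.1).sub
      (hucont.mono (prod_mono_right hsub)))
    (fun y hy s hs => (hasDerivAt_erfProfile_time hc N a y hs.1).hasDerivWithinAt.fun_sub
      ((hut y (Ioo_subset_Icc_self hy) s (hsub hs)).mono hsub))
    (fun y hy s hs => (hasDerivAt_erfProfile c N a y s).fun_sub
      ((hux y (Ioo_subset_Icc_self hy) s (hsub hs)).hasDerivAt (hIx hy)))
    (fun y hy s hs => (hasDerivAt_erfProfileX c N a y s).fun_sub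
      ((huxx y (Ioo_subset_Icc_self hy) s (hsub hs)).hasDerivAt (hIx hy)))
    (fun y hy s hs => by rw [hpde y (Ioo_subset_Icc_self hy) s (hsub hs)]; ring)
    (fun s hs => by
      have h := hle x₀ s hs.1 ((hlat s hs).trans (by
        gcongr; linarith [min_le_left (x - x₀) (x₁ - x)]))
      linarith [(abs_lt.1 (hbdd x₀ (left_mem_Icc.2 hx.le) s (hsub hs))).1])
    (fun s hs => by
      have h := hge x₁ s hs.1 ((hlat s hs).trans (by
        gcongr; linarith [min_le_right (x - x₀) (x₁ - x)]))
      linarith [(abs_lt.1 (hbdd x₁ (right_mem_Icc.2 hx.le) s (hsub hs))).2])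
    hinit (p := p) (q := q) hp hq
  have hderiv : ux x t ≤ erfProfileX c N a x t := by
    by_contra! h
    have hw := (hasDerivAt_erfProfile c N a x t).fun_sub ((hux x hxI t htT).hasDerivAt (hIx hxm))
    obtain ⟨p, hp, q, hq, hwp, hwq⟩ := hw.exists_sign_change_of_neg
      (by simp only [erfProfile, hargx, hNz, sub_self]) (by linarith) hxm.1 hxm.2
    exact hwq.not_ge (hpattern p ⟨hp.1.le, (hp.2.trans hxm.2).le⟩ q
      ⟨(hxm.1.trans hq.1).le, hq.2.le⟩ (hp.2.trans hq.1) hwp)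
  refine hderiv.trans_eq ?_
  rw [erfProfileX, hargx, Real.sqrt_div hc.le, Real.sqrt_mul Real.pi_pos.le]
  field_simp
end

section
/- For every M > 0 there exist c, T' > 0, depending only on M, with the following property. Let n ≥ 1, T > 0, and let u : ℝⁿ × [0,T] → ℝ be infinitely differentiable, move by graphical mean curvature flow, be periodic with respect to some basis γ₁,…,γₙ of ℝⁿ (u(x+γₖ,t) = u(x,t) for every k), and satisfy |u(x,t)| < M everywhere. Then for every x ∈ ℝⁿ and every t ∈ (0, min(T,T')], the gradient function satisfies √(1 + |Du(x,t)|²) ≤ √t · exp( c·(|u(x,t)| − 2M)² / (4t) ). -/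
open Finset

/-- The inverse metric `δᵢⱼ - pᵢ pⱼ / (1 + |p|²)` of a graph with gradient `p`. -/
noncomputable def graphInvMetric {ι : Type*} [Fintype ι] [DecidableEq ι] (p : ι → ℝ) (i j : ι) : ℝ :=
  (if i = j then (1 : ℝ) else 0) - p i * p j / (1 + ∑ k, p k ^ 2)

section Algebra

variable {ι : Type*} [Fintype ι] [DecidableEq ι]

lemma one_add_sum_sq_pos {ι : Type*} [Fintype ι] (p : ι → ℝ) : 0 < 1 + ∑ k, p k ^ 2 := by positivity

lemma graphInvMetric_form (p x y : ι → ℝ) :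
    ∑ i, ∑ j, graphInvMetric p i j * (x i * y j) =
      ∑ i, x i * y i - (∑ i, p i * x i) * (∑ i, p i * y i) / (1 + ∑ k, p k ^ 2) := by
  simp only [graphInvMetric, sub_mul, Finset.sum_sub_distrib]
  congr 1
  · simp
  · rw [Finset.sum_mul_sum, Finset.sum_div]
    refine Finset.sum_congr rfl fun i _ => ?_
    rw [Finset.sum_div]
    refine Finset.sum_congr rfl fun j _ => ?_
    ring

lemma exists_graphInvMetric_eq_sum (p : ι → ℝ) :
    ∃ B : ι → ι → ℝ, ∀ i j, graphInvMetric p i j = ∑ m, B m i * B m j := by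
  set W := 1 + ∑ k, p k ^ 2 with hW
  have hWpos : 0 < W := one_add_sum_sq_pos p
  set v := √W
  have hv : 0 < v := Real.sqrt_pos.2 hWpos
  have hvW : v ^ 2 = W := Real.sq_sqrt hWpos.le
  obtain ⟨α, hα⟩ : ∃ α, α = v * (v + 1) := ⟨_, rfl⟩
  refine ⟨fun m i => (if m = i then 1 else 0) - p m * p i / α, fun i j => ?_⟩
  have key : ∀ m, ((if m = i then (1 : ℝ) else 0) - p m * p i / α) *
      ((if m = j then (1 : ℝ) else 0) - p m * p j / α) =
      (if m = i then (if m = j then (1 : ℝ) else 0) else 0)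
        - (if m = i then p m * p j / α else 0) - (if m = j then p m * p i / α else 0)
        + p m ^ 2 * (p i * p j / α ^ 2) := by
    intro m
    split_ifs <;> ring
  have hs : ∑ k, p k ^ 2 = v ^ 2 - 1 := by rw [hvW, hW]; ring
  simp only [key, Finset.sum_add_distrib, Finset.sum_sub_distrib, Finset.sum_ite_eq',
    Finset.mem_univ, if_true, ← Finset.sum_mul, graphInvMetric, hs, add_sub_cancel]
  rw [hα]
  split_ifs
  all_goals
    field_simp
    ring

lemma sum_mul_eq_of_eq_sum {ι : Type*} [Fintype ι] {a B : ι → ι → ℝ} (hB : ∀ i j, a i j = ∑ m, B m i * B m j)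
    (Q : ι → ι → ℝ) :
    ∑ i, ∑ j, a i j * Q i j = ∑ m, ∑ i, ∑ j, B m i * B m j * Q i j := by
  simp only [hB, Finset.sum_mul]
  rw [Finset.sum_comm (s := univ) (t := univ) (f := fun m i => ∑ j, B m i * B m j * Q i j)]
  exact Finset.sum_congr rfl fun i _ => Finset.sum_comm

lemma sum_mul_sum_mul_eq_sq {ι : Type*} [Fintype ι] (b x : ι → ℝ) :
    ∑ i, ∑ j, b i * b j * (x i * x j) = (∑ i, b i * x i) ^ 2 := by
  rw [sq, Finset.sum_mul_sum]
  exact Finset.sum_congr rfl fun i _ => Finset.sum_congr rfl fun j _ => by ring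

lemma sum_graphInvMetric_mul_nonpos (p : ι → ℝ) (Q : ι → ι → ℝ)
    (hQ : ∀ b : ι → ℝ, ∑ i, ∑ j, b i * b j * Q i j ≤ 0) :
    ∑ i, ∑ j, graphInvMetric p i j * Q i j ≤ 0 := by
  obtain ⟨B, hB⟩ := exists_graphInvMetric_eq_sum p
  rw [sum_mul_eq_of_eq_sum hB]
  exact Finset.sum_nonpos fun m _ => hQ (B m)

lemma graphInvMetric_form_nonneg (p x : ι → ℝ) :
    0 ≤ ∑ i, ∑ j, graphInvMetric p i j * (x i * x j) := by
  obtain ⟨B, hB⟩ := exists_graphInvMetric_eq_sum p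
  rw [sum_mul_eq_of_eq_sum hB]
  simp only [sum_mul_sum_mul_eq_sq]
  positivity

/-- Cauchy-Schwarz inequality for the inverse metric applied to `∑ₖ cₖ hₖ`. -/
lemma graphInvMetric_form_sum_le (p c : ι → ℝ) (h : ι → ι → ℝ) :
    ∑ i, ∑ j, graphInvMetric p i j * ((∑ k, c k * h i k) * ∑ k, c k * h j k) ≤
      (∑ k, c k ^ 2) * ∑ i, ∑ j, graphInvMetric p i j * ∑ k, h i k * h j k := by
  obtain ⟨B, hB⟩ := exists_graphInvMetric_eq_sum p
  have hr : ∀ m, ∑ i, ∑ j, B m i * B m j * ∑ k, h i k * h j k =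
      ∑ k, (∑ i, B m i * h i k) ^ 2 := by
    intro m
    simp only [← sum_mul_sum_mul_eq_sq, Finset.mul_sum]
    exact (Finset.sum_comm.trans (Finset.sum_congr rfl fun i _ => Finset.sum_comm)).symm
  simp only [sum_mul_eq_of_eq_sum hB, hr, sum_mul_sum_mul_eq_sq]
  rw [Finset.mul_sum]
  refine Finset.sum_le_sum fun m _ => ?_
  have : ∑ i, B m i * ∑ k, c k * h i k = ∑ k, c k * ∑ i, B m i * h i k := by
    simp only [Finset.mul_sum]
    rw [Finset.sum_comm]
    exact Finset.sum_congr rfl fun k _ => Finset.sum_congr rfl fun i _ => by ring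
  rw [this]
  exact Finset.sum_mul_sq_le_sq_mul_sq _ _ _

/-- The maximum principle computation at a critical point: `p`, `H`, `K` are the first, second
and third spatial derivatives of `u`. -/
lemma max_principle_algebra (p : ι → ℝ) (H : ι → ι → ℝ) (K : ι → ι → ι → ℝ) (W w t : ℝ)
    (q : ι → ℝ)
    (hHs : ∀ i j, H i j = H j i) (hK : ∀ i j k, K i j k = K k i j)
    (hW : W = 1 + ∑ k, p k ^ 2) (hq : ∀ i, q i = ∑ k, p k * H i k) (ht : 0 < t)
    (crit : ∀ i, 2 * q i / W + 2 * w * p i / t = 0)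
    (hess : ∀ b : ι → ℝ, ∑ i, ∑ j, b i * b j *
      ((2 * ∑ k, (H i k * H j k + p k * K i j k)) / W - (2 * q j) * (2 * q i) / W ^ 2
        + (-(2 * p j * p i) + 2 * w * H i j) / t) ≤ 0)
    (time : 0 ≤ (2 * ∑ k, p k * (∑ i, ∑ j, (graphInvMetric p i j * K k i j
        + (-(H k i * p j + p i * H k j) / W + p i * p j * (2 * q k) / W ^ 2) * H i j))) / W - 1 / t
      + 2 * w * (∑ i, ∑ j, graphInvMetric p i j * H i j) / t + w ^ 2 / t ^ 2) :
    0 ≤ -2 * w ^ 2 / t ^ 2 * (1 - 1 / W) - 1 / t + w ^ 2 / t ^ 2 + 2 / t * (1 - 1 / W) := by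
  have hWpos : 0 < W := hW ▸ one_add_sum_sq_pos p
  set a := graphInvMetric p with ha
  have hpp : ∑ i, ∑ j, a i j * (p i * p j) = 1 - 1 / W := by
    have hs : ∑ i, p i * p i = W - 1 := by rw [hW]; simp [sq]
    rw [ha, graphInvMetric_form, ← hW, hs]
    field_simp
    ring
  have hqp : ∀ i, q i = -(W * w / t) * p i := by
    intro i
    have := crit i
    field_simp at this ⊢
    linarith
  have hqq : ∑ i, ∑ j, a i j * (q i * q j) = (W * w / t) ^ 2 * (1 - 1 / W) := by
    rw [← hpp, Finset.mul_sum]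
    refine Finset.sum_congr rfl fun i _ => ?_
    rw [Finset.mul_sum]
    refine Finset.sum_congr rfl fun j _ => ?_
    rw [hqp i, hqp j]; ring
  have hmetric : ∑ k, p k * (∑ i, ∑ j,
      (-(H k i * p j + p i * H k j) / W + p i * p j * (2 * q k) / W ^ 2) * H i j) =
      -2 / W * ∑ i, ∑ j, a i j * (q i * q j) := by
    have hin : ∀ k, ∑ i, ∑ j,
        (-(H k i * p j + p i * H k j) / W + p i * p j * (2 * q k) / W ^ 2) * H i j =
        -2 / W * ∑ i, H k i * q i + 2 * q k / W ^ 2 * ∑ i, p i * q i := by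
      intro k
      have h1 : ∑ i, ∑ j, H k i * p j * H i j = ∑ i, H k i * q i := by
        refine Finset.sum_congr rfl fun i _ => ?_
        rw [hq, Finset.mul_sum]
        exact Finset.sum_congr rfl fun j _ => by ring
      have h2 : ∑ i, ∑ j, p i * H k j * H i j = ∑ i, H k i * q i := by
        rw [Finset.sum_comm]
        refine Finset.sum_congr rfl fun i _ => ?_
        rw [hq, Finset.mul_sum]
        exact Finset.sum_congr rfl fun j _ => by rw [hHs j i]; ring
      have h3 : ∑ i, ∑ j, p i * p j * H i j = ∑ i, p i * q i := by
        refine Finset.sum_congr rfl fun i _ => ?_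
        rw [hq, Finset.mul_sum]
        exact Finset.sum_congr rfl fun j _ => by ring
      calc _ = ∑ i, ∑ j, (-1 / W * (H k i * p j * H i j) + -1 / W * (p i * H k j * H i j)
              + 2 * q k / W ^ 2 * (p i * p j * H i j)) := by
            refine Finset.sum_congr rfl fun i _ => Finset.sum_congr rfl fun j _ => ?_
            ring
        _ = -1 / W * (∑ i, ∑ j, H k i * p j * H i j) + -1 / W * (∑ i, ∑ j, p i * H k j * H i j)
              + 2 * q k / W ^ 2 * (∑ i, ∑ j, p i * p j * H i j) := by
            simp only [Finset.sum_add_distrib, Finset.mul_sum]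
        _ = _ := by rw [h1, h2, h3]; ring
    have h4 : ∑ k, p k * ∑ i, H k i * q i = ∑ i, q i * q i := by
      simp only [Finset.mul_sum]
      rw [Finset.sum_comm]
      refine Finset.sum_congr rfl fun i _ => ?_
      have : q i * q i = (∑ k, p k * H i k) * q i := by rw [← hq]
      rw [this, Finset.sum_mul]
      exact Finset.sum_congr rfl fun j _ => by rw [hHs j i]; ring
    rw [ha, graphInvMetric_form, ← hW, ← h4]
    simp only [hin]
    calc _ = ∑ k, (-2 / W * (p k * ∑ i, H k i * q i)
          + 2 / W ^ 2 * (∑ i, p i * q i) * (p k * q k)) :=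
          Finset.sum_congr rfl fun k _ => by ring
      _ = _ := by
          rw [Finset.sum_add_distrib, ← Finset.mul_sum, ← Finset.mul_sum]
          ring
  have hthird : ∑ k, p k * ∑ i, ∑ j, a i j * K k i j =
      ∑ i, ∑ j, a i j * ∑ k, p k * K i j k := by
    simp only [Finset.mul_sum]
    rw [Finset.sum_comm]
    refine Finset.sum_congr rfl fun i _ => ?_
    rw [Finset.sum_comm]
    refine Finset.sum_congr rfl fun j _ => Finset.sum_congr rfl fun k _ => ?_
    rw [hK i j k]; ring
  have hcs : ∑ i, ∑ j, a i j * (q i * q j) ≤ W * ∑ i, ∑ j, a i j * ∑ k, H i k * H j k := by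
    have h0 : 0 ≤ ∑ i, ∑ j, a i j * ∑ k, H i k * H j k := by
      simp only [Finset.mul_sum]
      simp only [Finset.sum_comm (s := univ) (t := univ) (f := fun j k => a _ j * _)]
      rw [Finset.sum_comm]
      exact Finset.sum_nonneg fun k _ => graphInvMetric_form_nonneg p fun i => H i k
    have := graphInvMetric_form_sum_le p p H
    simp only [← hq] at this
    refine this.trans (mul_le_mul_of_nonneg_right ?_ h0)
    rw [hW]; linarith
  have hell := sum_graphInvMetric_mul_nonpos p _ hess
  have hsplit : ∑ i, ∑ j, a i j *
      ((2 * ∑ k, (H i k * H j k + p k * K i j k)) / W - (2 * q j) * (2 * q i) / W ^ 2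
        + (-(2 * p j * p i) + 2 * w * H i j) / t) =
      2 / W * (∑ i, ∑ j, a i j * ∑ k, H i k * H j k) + 2 / W * (∑ i, ∑ j, a i j * ∑ k, p k * K i j k)
      - 4 / W ^ 2 * (∑ i, ∑ j, a i j * (q i * q j)) - 2 / t * (∑ i, ∑ j, a i j * (p i * p j))
      + 2 * w / t * ∑ i, ∑ j, a i j * H i j := by
    simp only [Finset.mul_sum (s := univ) (a := (2 / W : ℝ)),
      Finset.mul_sum (s := univ) (a := (4 / W ^ 2 : ℝ)),
      Finset.mul_sum (s := univ) (a := (2 / t : ℝ)), Finset.mul_sum (s := univ) (a := (2 * w / t : ℝ)),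
      ← Finset.sum_add_distrib, ← Finset.sum_sub_distrib]
    refine Finset.sum_congr rfl fun i _ => Finset.sum_congr rfl fun j _ => ?_
    rw [Finset.sum_add_distrib]
    ring
  simp only [Finset.sum_add_distrib (s := univ), mul_add] at time
  rw [hmetric, hthird] at time
  rw [← ha, hsplit] at hell
  rw [hqq] at hell time hcs
  rw [hpp] at hell
  set X := ∑ i, ∑ j, a i j * ∑ k, H i k * H j k
  set Y := ∑ i, ∑ j, a i j * ∑ k, p k * K i j k
  set Z := ∑ i, ∑ j, a i j * H i j
  have hX : 2 * w ^ 2 / t ^ 2 * (1 - 1 / W) ≤ 2 / W * X := by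
    have : 2 * w ^ 2 / t ^ 2 * (1 - 1 / W) = 2 / W ^ 2 * ((W * w / t) ^ 2 * (1 - 1 / W)) := by
      field_simp
    rw [this]
    calc _ ≤ 2 / W ^ 2 * (W * X) := by gcongr
      _ = _ := by field_simp
  have e1 : 4 / W ^ 2 * ((W * w / t) ^ 2 * (1 - 1 / W)) = 4 * w ^ 2 / t ^ 2 * (1 - 1 / W) := by
    field_simp
  have e2 : (2 * Y + 2 * (-2 / W * ((W * w / t) ^ 2 * (1 - 1 / W)))) / W =
      2 / W * Y - 4 * w ^ 2 / t ^ 2 * (1 - 1 / W) := by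
    field_simp
    ring
  rw [e1] at hell
  rw [e2] at time
  have e3 : 2 * w * Z / t = 2 * w / t * Z := by ring
  rw [e3] at time
  have e4 : -2 * w ^ 2 / t ^ 2 * (1 - 1 / W) = -(2 * w ^ 2 / t ^ 2 * (1 - 1 / W)) := by ring
  linarith

end Algebra

open Filter Topology
open scoped ContDiff

/-- The derivative of `f` at `z` in the direction `v`. -/
noncomputable def dirDeriv {E : Type*} [NormedAddCommGroup E] [NormedSpace ℝ E]
    (v : E) (f : E → ℝ) (z : E) : ℝ :=
  fderiv ℝ f z v

section DirDeriv

variable {E : Type*} [NormedAddCommGroup E] [NormedSpace ℝ E] {Ω : Set E} {f g : E → ℝ} {z : E}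

lemma ContDiffOn.dirDeriv (hΩ : IsOpen Ω) (hf : ContDiffOn ℝ ∞ f Ω) (v : E) :
    ContDiffOn ℝ ∞ (dirDeriv v f) Ω :=
  (hf.fderiv_of_isOpen hΩ (by simp)).clm_apply contDiffOn_const

lemma hasDerivAt_line (hΩ : IsOpen Ω) (hf : ContDiffOn ℝ ∞ f Ω) (hz : z ∈ Ω) (v : E) :
    HasDerivAt (fun s : ℝ => f (z + s • v)) (dirDeriv v f z) 0 :=
  ((hf.contDiffAt (hΩ.mem_nhds hz)).differentiableAt (by simp)).hasFDerivAt.hasLineDerivAt v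

lemma dirDeriv_comm (hΩ : IsOpen Ω) (hf : ContDiffOn ℝ ∞ f Ω) (hz : z ∈ Ω) (v w : E) :
    dirDeriv v (dirDeriv w f) z = dirDeriv w (dirDeriv v f) z := by
  have hd : DifferentiableAt ℝ (fderiv ℝ f) z :=
    ((hf.fderiv_of_isOpen (m := ∞) hΩ (by simp)).contDiffAt (hΩ.mem_nhds hz)).differentiableAt
      (by simp)
  have key : ∀ a b : E, dirDeriv a (dirDeriv b f) z = fderiv ℝ (fderiv ℝ f) z a b := by
    intro a b
    unfold dirDeriv
    rw [fderiv_clm_apply hd (differentiableAt_const b)]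
    simp
  have hs : IsSymmSndFDerivAt ℝ f z :=
    (hf.contDiffAt (hΩ.mem_nhds hz)).isSymmSndFDerivAt
      (by simpa using WithTop.coe_le_coe.2 (le_top : (2 : ℕ∞) ≤ ⊤))
  rw [key, key, hs.eq]

lemma dirDeriv_congr (hΩ : IsOpen Ω) (h : Set.EqOn f g Ω) (hz : z ∈ Ω) (v : E) :
    dirDeriv v f z = dirDeriv v g z := by
  unfold dirDeriv
  rw [(h.eventuallyEq_of_mem (hΩ.mem_nhds hz)).fderiv_eq]

lemma deriv_deriv_nonpos_of_isLocalMax {g : ℝ → ℝ} {x : ℝ} (hg : IsLocalMax g x)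
    (hc : ContinuousAt g x) : deriv (deriv g) x ≤ 0 := by
  by_contra! h
  have hmin := isLocalMin_of_deriv_deriv_pos h hg.deriv_eq_zero hc
  have hconst : g =ᶠ[𝓝 x] fun _ => g x := by
    filter_upwards [hg, hmin] with y h1 h2 using le_antisymm h1 h2
  have : deriv (deriv g) x = 0 := by
    rw [hconst.deriv.deriv_eq]
    simp
  exact h.ne' this

lemma dirDeriv_eq_zero_of_isLocalMax (hΩ : IsOpen Ω) (hf : ContDiffOn ℝ ∞ f Ω) (hz : z ∈ Ω)
    {v : E} (hmax : IsLocalMax (fun s : ℝ => f (z + s • v)) 0) : dirDeriv v f z = 0 := by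
  rw [← (hasDerivAt_line hΩ hf hz v).deriv, hmax.deriv_eq_zero]

lemma dirDeriv_dirDeriv_nonpos_of_isLocalMax (hΩ : IsOpen Ω) (hf : ContDiffOn ℝ ∞ f Ω)
    (hz : z ∈ Ω) {v : E} (hmax : IsLocalMax (fun s : ℝ => f (z + s • v)) 0) :
    dirDeriv v (dirDeriv v f) z ≤ 0 := by
  have hev : deriv (fun s : ℝ => f (z + s • v)) =ᶠ[𝓝 0] fun s => dirDeriv v f (z + s • v) := by
    have hcont : ContinuousAt (fun s : ℝ => z + s • v) 0 := by fun_prop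
    filter_upwards [hcont.preimage_mem_nhds (by simpa using hΩ.mem_nhds hz)] with s hs
    have h := hasDerivAt_line hΩ hf hs v
    rw [← sub_self s] at h
    have := HasDerivAt.comp_sub_const (f := fun r : ℝ => f (z + s • v + r • v)) s s h
    refine HasDerivAt.deriv (this.congr_of_eventuallyEq (Eventually.of_forall fun r => ?_))
    simp only
    congr 1
    module
  rw [← (hasDerivAt_line hΩ (hf.dirDeriv hΩ v) hz v).deriv, ← hev.deriv_eq]
  exact deriv_deriv_nonpos_of_isLocalMax hmax (hasDerivAt_line hΩ hf hz v).continuousAt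

lemma dirDeriv_nonneg_of_eventually_le (hΩ : IsOpen Ω) (hf : ContDiffOn ℝ ∞ f Ω) (hz : z ∈ Ω)
    {v : E} (hmax : ∀ᶠ s : ℝ in 𝓝[<] 0, f (z + s • v) ≤ f z) : 0 ≤ dirDeriv v f z := by
  have h := (hasDerivAt_line hΩ hf hz v).hasDerivWithinAt (s := Set.Iio 0)
  rw [hasDerivWithinAt_iff_tendsto_slope' (by simp)] at h
  refine ge_of_tendsto h ?_
  filter_upwards [hmax, self_mem_nhdsWithin] with s hs hs0
  rw [slope_def_field]
  refine div_nonneg_of_nonpos ?_ (by simpa using (Set.mem_Iio.1 hs0).le)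
  simpa using hs

lemma dirDeriv_sum {ι : Type*} [Fintype ι] (b : ι → ℝ) (e : ι → E) (f : E → ℝ) (z : E) :
    dirDeriv (∑ i, b i • e i) f z = ∑ i, b i * dirDeriv (e i) f z := by
  simp [dirDeriv]

lemma dirDeriv_dirDeriv_sum {ι : Type*} [Fintype ι] (hΩ : IsOpen Ω) (hf : ContDiffOn ℝ ∞ f Ω)
    (hz : z ∈ Ω) (b : ι → ℝ) (e : ι → E) :
    dirDeriv (∑ i, b i • e i) (dirDeriv (∑ i, b i • e i) f) z =
      ∑ i, ∑ j, b i * b j * dirDeriv (e i) (dirDeriv (e j) f) z := by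
  rw [dirDeriv_sum]
  refine Finset.sum_congr rfl fun i _ => ?_
  have h : HasDerivAt (fun s : ℝ => ∑ j, b j * dirDeriv (e j) f (z + s • e i))
      (∑ j, b j * dirDeriv (e i) (dirDeriv (e j) f) z) 0 :=
    HasDerivAt.fun_sum fun j _ =>
      (hasDerivAt_line hΩ (hf.dirDeriv hΩ (e j)) hz (e i)).const_mul (b j)
  simp only [← dirDeriv_sum] at h
  rw [(hasDerivAt_line hΩ (hf.dirDeriv hΩ _) hz (e i)).unique h, Finset.mul_sum]
  exact Finset.sum_congr rfl fun j _ => by ring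

end DirDeriv

section Graph

variable {ι : Type*} [Fintype ι] [DecidableEq ι]

/-- The spatial coordinate directions in space-time. -/
def spaceDir (i : ι) : (ι → ℝ) × ℝ := (Pi.single i 1, 0)

/-- The time direction in space-time. -/
def timeDir : (ι → ℝ) × ℝ := (0, 1)

/-- The squared gradient function `1 + |Du|²`. -/
noncomputable def gradSq (U : (ι → ℝ) × ℝ → ℝ) (z : (ι → ℝ) × ℝ) : ℝ :=
  1 + ∑ k, dirDeriv (spaceDir k) U z ^ 2

/-- The logarithm of `(1 + |Du|²) / (t * exp ((2M - u)² / t))`. -/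
noncomputable def logQuot (M : ℝ) (U : (ι → ℝ) × ℝ → ℝ) (z : (ι → ℝ) × ℝ) : ℝ :=
  Real.log (gradSq U z) - Real.log z.2 - (2 * M - U z) ^ 2 / z.2

lemma gradSq_pos (U : (ι → ℝ) × ℝ → ℝ) (z : (ι → ℝ) × ℝ) : 0 < gradSq U z :=
  one_add_sum_sq_pos _

variable {Ω : Set ((ι → ℝ) × ℝ)} {U : (ι → ℝ) × ℝ → ℝ} {z : (ι → ℝ) × ℝ}

lemma contDiffOn_gradSq (hΩ : IsOpen Ω) (hU : ContDiffOn ℝ ∞ U Ω) :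
    ContDiffOn ℝ ∞ (gradSq U) Ω :=
  contDiffOn_const.add (ContDiffOn.sum fun k _ => (hU.dirDeriv hΩ (spaceDir k)).pow 2)

lemma contDiffOn_logQuot (hΩ : IsOpen Ω) (hU : ContDiffOn ℝ ∞ U Ω) (hpos : ∀ z ∈ Ω, 0 < z.2)
    (M : ℝ) : ContDiffOn ℝ ∞ (logQuot M U) Ω := by
  refine (((contDiffOn_gradSq hΩ hU).log fun z _ => (gradSq_pos U z).ne').sub
    (contDiffOn_snd.log fun z hz => (hpos z hz).ne')).sub ?_
  exact ((contDiffOn_const.sub hU).pow 2).div contDiffOn_snd fun z hz => (hpos z hz).ne'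

lemma hasDerivAt_gradSq (hΩ : IsOpen Ω) (hU : ContDiffOn ℝ ∞ U Ω) (hz : z ∈ Ω)
    (v : (ι → ℝ) × ℝ) :
    HasDerivAt (fun s : ℝ => gradSq U (z + s • v))
      (2 * ∑ k, dirDeriv (spaceDir k) U z * dirDeriv v (dirDeriv (spaceDir k) U) z) 0 := by
  have := (HasDerivAt.fun_sum (u := Finset.univ) fun k _ =>
    (hasDerivAt_line hΩ (hU.dirDeriv hΩ (spaceDir k)) hz v).pow 2).const_add 1
  refine this.congr_deriv ?_
  rw [Finset.mul_sum]
  refine Finset.sum_congr rfl fun k _ => ?_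
  simp
  ring

lemma dirDeriv_logQuot (hΩ : IsOpen Ω) (hU : ContDiffOn ℝ ∞ U Ω) (hpos : ∀ z ∈ Ω, 0 < z.2)
    (hz : z ∈ Ω) (M : ℝ) (v : (ι → ℝ) × ℝ) :
    dirDeriv v (logQuot M U) z =
      (2 * ∑ k, dirDeriv (spaceDir k) U z * dirDeriv v (dirDeriv (spaceDir k) U) z) / gradSq U z
      - v.2 / z.2 + 2 * (2 * M - U z) * dirDeriv v U z / z.2
      + (2 * M - U z) ^ 2 * v.2 / z.2 ^ 2 := by
  have ht : HasDerivAt (fun s : ℝ => (z + s • v).2) v.2 0 := by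
    simpa using ((hasDerivAt_id (0 : ℝ)).mul_const v.2).const_add z.2
  have htz : (z + (0 : ℝ) • v).2 ≠ 0 := by simpa using (hpos z hz).ne'
  have hw := ((hasDerivAt_line hΩ hU hz v).const_sub (2 * M)).pow 2
  have h := (((hasDerivAt_gradSq hΩ hU hz v).log (gradSq_pos U _).ne').sub (ht.log htz)).sub
    (hw.div ht htz)
  refine ((hasDerivAt_line hΩ (contDiffOn_logQuot hΩ hU hpos M) hz v).unique h).trans ?_
  have := (hpos z hz).ne'
  simp
  field_simp
  ring

lemma dirDeriv_dirDeriv_logQuot (hΩ : IsOpen Ω) (hU : ContDiffOn ℝ ∞ U Ω)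
    (hpos : ∀ z ∈ Ω, 0 < z.2) (hz : z ∈ Ω) (M : ℝ) (v w : (ι → ℝ) × ℝ) (hv : v.2 = 0)
    (hw : w.2 = 0) :
    dirDeriv v (dirDeriv w (logQuot M U)) z =
      (2 * ∑ k, (dirDeriv v (dirDeriv (spaceDir k) U) z * dirDeriv w (dirDeriv (spaceDir k) U) z
        + dirDeriv (spaceDir k) U z * dirDeriv v (dirDeriv w (dirDeriv (spaceDir k) U)) z))
          / gradSq U z
      - (2 * ∑ k, dirDeriv (spaceDir k) U z * dirDeriv w (dirDeriv (spaceDir k) U) z)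
        * (2 * ∑ k, dirDeriv (spaceDir k) U z * dirDeriv v (dirDeriv (spaceDir k) U) z)
          / gradSq U z ^ 2
      + (-(2 * dirDeriv w U z * dirDeriv v U z)
        + 2 * (2 * M - U z) * dirDeriv v (dirDeriv w U) z) / z.2 := by
  have hG := fun k : ι => hU.dirDeriv hΩ (spaceDir k)
  have hz2 : ∀ s : ℝ, (z + s • v).2 = z.2 := by simp [hv]
  have hnum := (HasDerivAt.fun_sum (u := Finset.univ) fun k _ =>
    (hasDerivAt_line hΩ (hG k) hz v).mul
      (hasDerivAt_line hΩ ((hG k).dirDeriv hΩ w) hz v)).const_mul 2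
  have h := (hnum.div (hasDerivAt_gradSq hΩ hU hz v) (gradSq_pos U _).ne').add
    (((((hasDerivAt_line hΩ hU hz v).const_sub (2 * M)).const_mul 2).mul
      (hasDerivAt_line hΩ (hU.dirDeriv hΩ w) hz v)).div_const z.2)
  have hQ := contDiffOn_logQuot hΩ hU hpos M
  have hev : ∀ᶠ s : ℝ in 𝓝 0, z + s • v ∈ Ω := by
    have hcont : ContinuousAt (fun s : ℝ => z + s • v) 0 := by fun_prop
    exact hcont.preimage_mem_nhds (by simpa using hΩ.mem_nhds hz)
  refine ((hasDerivAt_line hΩ (hQ.dirDeriv hΩ w) hz v).unique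
    (h.congr_of_eventuallyEq ?_)).trans ?_
  · filter_upwards [hev] with s hs
    rw [dirDeriv_logQuot hΩ hU hpos hs M w, hw, hz2]
    simp
  · have h1 := (gradSq_pos U z).ne'
    have h2 := (hpos z hz).ne'
    simp
    field_simp

lemma hasDerivAt_graphInvMetric (hΩ : IsOpen Ω) (hU : ContDiffOn ℝ ∞ U Ω) (hz : z ∈ Ω)
    (v : (ι → ℝ) × ℝ) (i j : ι) :
    HasDerivAt (fun s : ℝ => graphInvMetric (fun k => dirDeriv (spaceDir k) U (z + s • v)) i j)
      (-(dirDeriv v (dirDeriv (spaceDir i) U) z * dirDeriv (spaceDir j) U z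
          + dirDeriv (spaceDir i) U z * dirDeriv v (dirDeriv (spaceDir j) U) z) / gradSq U z
        + dirDeriv (spaceDir i) U z * dirDeriv (spaceDir j) U z
          * (2 * ∑ k, dirDeriv (spaceDir k) U z * dirDeriv v (dirDeriv (spaceDir k) U) z)
          / gradSq U z ^ 2) 0 := by
  have hG := fun k : ι => hasDerivAt_line hΩ (hU.dirDeriv hΩ (spaceDir k)) hz v
  have h := (((hG i).mul (hG j)).div (hasDerivAt_gradSq hΩ hU hz v)
    (gradSq_pos U _).ne').const_sub (if i = j then (1 : ℝ) else 0)
  refine h.congr_deriv ?_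
  have h1 := (gradSq_pos U z).ne'
  simp
  field_simp
  ring

lemma dirDeriv_timeDir_dirDeriv (hΩ : IsOpen Ω) (hU : ContDiffOn ℝ ∞ U Ω)
    (hflow : ∀ z ∈ Ω, dirDeriv timeDir U z =
      ∑ i, ∑ j, graphInvMetric (fun k => dirDeriv (spaceDir k) U z) i j *
        dirDeriv (spaceDir i) (dirDeriv (spaceDir j) U) z)
    (hz : z ∈ Ω) (v : (ι → ℝ) × ℝ) :
    dirDeriv timeDir (dirDeriv v U) z = ∑ i, ∑ j,
      (graphInvMetric (fun k => dirDeriv (spaceDir k) U z) i j *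
        dirDeriv v (dirDeriv (spaceDir i) (dirDeriv (spaceDir j) U)) z
      + (-(dirDeriv v (dirDeriv (spaceDir i) U) z * dirDeriv (spaceDir j) U z
          + dirDeriv (spaceDir i) U z * dirDeriv v (dirDeriv (spaceDir j) U) z) / gradSq U z
        + dirDeriv (spaceDir i) U z * dirDeriv (spaceDir j) U z
          * (2 * ∑ k, dirDeriv (spaceDir k) U z * dirDeriv v (dirDeriv (spaceDir k) U) z)
          / gradSq U z ^ 2) * dirDeriv (spaceDir i) (dirDeriv (spaceDir j) U) z) := by
  have h := HasDerivAt.fun_sum (u := Finset.univ) fun i (_ : i ∈ Finset.univ) =>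
    HasDerivAt.fun_sum (u := Finset.univ) fun j (_ : j ∈ Finset.univ) =>
      (hasDerivAt_graphInvMetric hΩ hU hz v i j).mul
        (hasDerivAt_line hΩ ((hU.dirDeriv hΩ (spaceDir j)).dirDeriv hΩ (spaceDir i)) hz v)
  have hcont : ContinuousAt (fun s : ℝ => z + s • v) 0 := by fun_prop
  rw [dirDeriv_comm hΩ hU hz]
  refine ((hasDerivAt_line hΩ (hU.dirDeriv hΩ timeDir) hz v).unique
    (h.congr_of_eventuallyEq ?_)).trans ?_
  · filter_upwards [hcont.preimage_mem_nhds (by simpa using hΩ.mem_nhds hz)] with s hs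
    exact hflow _ hs
  · refine Finset.sum_congr rfl fun i _ => Finset.sum_congr rfl fun j _ => ?_
    rw [zero_smul, add_zero, add_comm]

/-- At a spatial maximum of `logQuot M U` which is also a maximum backwards in time, the flow
equation forces a lower bound on an explicit expression. -/
lemma le_of_logQuot_max (hΩ : IsOpen Ω) (hU : ContDiffOn ℝ ∞ U Ω) (hpos : ∀ z ∈ Ω, 0 < z.2)
    (hflow : ∀ z ∈ Ω, dirDeriv timeDir U z =
      ∑ i, ∑ j, graphInvMetric (fun k => dirDeriv (spaceDir k) U z) i j *
        dirDeriv (spaceDir i) (dirDeriv (spaceDir j) U) z)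
    (hz : z ∈ Ω) (M : ℝ) (hspace : ∀ y, logQuot M U (y, z.2) ≤ logQuot M U z)
    (htime : ∀ᶠ s : ℝ in 𝓝[<] 0, logQuot M U (z + s • timeDir) ≤ logQuot M U z) :
    0 ≤ -2 * (2 * M - U z) ^ 2 / z.2 ^ 2 * (1 - 1 / gradSq U z) - 1 / z.2
      + (2 * M - U z) ^ 2 / z.2 ^ 2 + 2 / z.2 * (1 - 1 / gradSq U z) := by
  have hQ := contDiffOn_logQuot hΩ hU hpos M
  have hG := fun k : ι => hU.dirDeriv hΩ (spaceDir k)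
  have hmax : ∀ v : (ι → ℝ) × ℝ, v.2 = 0 →
      IsLocalMax (fun s : ℝ => logQuot M U (z + s • v)) 0 := by
    intro v hv
    refine Eventually.of_forall fun s => ?_
    have : z + s • v = (z.1 + s • v.1, z.2) := by ext <;> simp [hv]
    simpa only [zero_smul, add_zero, this] using hspace _
  refine max_principle_algebra (fun k => dirDeriv (spaceDir k) U z)
    (fun i j => dirDeriv (spaceDir i) (dirDeriv (spaceDir j) U) z)
    (fun i j k => dirDeriv (spaceDir i) (dirDeriv (spaceDir j) (dirDeriv (spaceDir k) U)) z)
    (gradSq U z) (2 * M - U z) z.2 _ (fun i j => dirDeriv_comm hΩ hU hz _ _) (fun i j k => ?_)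
    rfl (fun i => rfl) (hpos z hz) (fun i => ?_) (fun b => ?_) ?_
  · rw [dirDeriv_comm hΩ (hG j) hz (spaceDir k)]
    exact dirDeriv_congr hΩ (fun y hy => dirDeriv_comm hΩ hU hy _ _) hz _
  · have := dirDeriv_eq_zero_of_isLocalMax hΩ hQ hz (hmax (spaceDir i) rfl)
    rw [dirDeriv_logQuot hΩ hU hpos hz] at this
    simpa [spaceDir] using this
  · have := dirDeriv_dirDeriv_nonpos_of_isLocalMax hΩ hQ hz
      (hmax (∑ i, b i • spaceDir i) (by simp [Prod.snd_sum, spaceDir]))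
    rw [dirDeriv_dirDeriv_sum hΩ hQ hz] at this
    refine le_of_eq_of_le ?_ this
    refine Finset.sum_congr rfl fun i _ => Finset.sum_congr rfl fun j _ => ?_
    rw [dirDeriv_dirDeriv_logQuot hΩ hU hpos hz M _ _ rfl rfl]
  · have := dirDeriv_nonneg_of_eventually_le hΩ hQ hz htime
    rw [dirDeriv_logQuot hΩ hU hpos hz, hflow z hz] at this
    simp only [dirDeriv_timeDir_dirDeriv hΩ hU hflow hz] at this
    simpa [timeDir] using this

end Graph

section Periodic

lemma exists_isCompact_sub_mem_closure {ι : Type*} [Fintype ι] [Nonempty ι] {γ : ι → ι → ℝ}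
    (hγ : LinearIndependent ℝ γ) :
    ∃ K : Set (ι → ℝ), IsCompact K ∧
      ∀ x, ∃ y ∈ K, x - y ∈ AddSubgroup.closure (Set.range γ) := by
  set b := basisOfLinearIndependentOfCardEqFinrank hγ (by simp)
  have hb : ⇑b = γ := coe_basisOfLinearIndependentOfCardEqFinrank hγ (by simp)
  refine ⟨closure (ZSpan.fundamentalDomain b),
    (ZSpan.fundamentalDomain_isBounded b).isCompact_closure, fun x =>
    ⟨ZSpan.fract b x, subset_closure (ZSpan.fract_mem_fundamentalDomain b x), ?_⟩⟩
  have hmem : (ZSpan.floor b x : ι → ℝ) ∈ (Submodule.span ℤ (Set.range b)).toAddSubgroup :=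
    (ZSpan.floor b x).2
  rw [Submodule.span_int_eq_addSubgroupClosure] at hmem
  rw [ZSpan.fract_apply, sub_sub_cancel, ← hb]
  exact hmem

lemma add_eq_of_mem_closure {E α : Type*} [AddCommGroup E] {s : Set E} {f : E → α}
    (hf : ∀ g ∈ s, ∀ x, f (x + g) = f x) {g : E} (hg : g ∈ AddSubgroup.closure s) (x : E) :
    f (x + g) = f x := by
  induction hg using AddSubgroup.closure_induction generalizing x with
  | mem g hg => exact hf g hg x
  | zero => rw [add_zero]
  | add g h _ _ ihg ihh => rw [← add_assoc, ihh, ihg]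
  | neg g _ ih => rw [← ih, neg_add_cancel_right]

end Periodic

/-- A smooth solution `u` of graphical mean curvature flow on `ℝⁿ × [0, T]`, periodic with respect
to a basis `γ`, with time derivative `ut`, gradient `gu` and Hessian `hu`. -/
structure IsPeriodicGraphFlow {n : ℕ} (T : ℝ) (u ut : (Fin n → ℝ) → ℝ → ℝ)
    (gu : (Fin n → ℝ) → ℝ → Fin n → ℝ) (hu : (Fin n → ℝ) → ℝ → Fin n → Fin n → ℝ)
    (γ : Fin n → Fin n → ℝ) : Prop where
  contDiffOn : ContDiffOn ℝ ∞ (fun z : (Fin n → ℝ) × ℝ => u z.1 z.2) (Set.univ ×ˢ Set.Icc 0 T)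
  hasDerivWithinAt_time : ∀ x, ∀ t ∈ Set.Icc (0:ℝ) T,
    HasDerivWithinAt (fun s => u x s) (ut x t) (Set.Icc 0 T) t
  hasDerivAt_space : ∀ x, ∀ t ∈ Set.Icc (0:ℝ) T, ∀ i,
    HasDerivAt (fun s : ℝ => u (x + s • (Pi.single i 1 : Fin n → ℝ)) t) (gu x t i) 0
  hasDerivAt_grad : ∀ x, ∀ t ∈ Set.Icc (0:ℝ) T, ∀ i j,
    HasDerivAt (fun s : ℝ => gu (x + s • (Pi.single i 1 : Fin n → ℝ)) t j) (hu x t i j) 0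
  flow : ∀ x, ∀ t ∈ Set.Icc (0:ℝ) T,
    ut x t = ∑ i, ∑ j, graphInvMetric (gu x t) i j * hu x t i j
  linearIndependent : LinearIndependent ℝ γ
  periodic : ∀ k x t, u (x + γ k) t = u x t

namespace IsPeriodicGraphFlow

variable {n : ℕ} {T : ℝ} {u ut : (Fin n → ℝ) → ℝ → ℝ} {gu : (Fin n → ℝ) → ℝ → Fin n → ℝ}
  {hu : (Fin n → ℝ) → ℝ → Fin n → Fin n → ℝ} {γ : Fin n → Fin n → ℝ}

lemma neg (h : IsPeriodicGraphFlow T u ut gu hu γ) :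
    IsPeriodicGraphFlow T (-u) (-ut) (-gu) (-hu) γ where
  contDiffOn := h.contDiffOn.neg
  hasDerivWithinAt_time x t ht := (h.hasDerivWithinAt_time x t ht).neg
  hasDerivAt_space x t ht i := (h.hasDerivAt_space x t ht i).neg
  hasDerivAt_grad x t ht i j := (h.hasDerivAt_grad x t ht i j).neg
  flow x t ht := by
    simp [h.flow x t ht, graphInvMetric]
  linearIndependent := h.linearIndependent
  periodic k x t := by simp [h.periodic k x t]

lemma contDiffOn_interior (h : IsPeriodicGraphFlow T u ut gu hu γ) :
    ContDiffOn ℝ ∞ (fun z : (Fin n → ℝ) × ℝ => u z.1 z.2) (Set.univ ×ˢ Set.Ioo 0 T) :=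
  h.contDiffOn.mono (Set.prod_mono subset_rfl Set.Ioo_subset_Icc_self)

lemma dirDeriv_spaceDir (h : IsPeriodicGraphFlow T u ut gu hu γ) {z : (Fin n → ℝ) × ℝ}
    (hz : z ∈ Set.univ ×ˢ Set.Ioo 0 T) (i : Fin n) :
    dirDeriv (spaceDir i) (fun z => u z.1 z.2) z = gu z.1 z.2 i := by
  refine (hasDerivAt_line (isOpen_univ.prod isOpen_Ioo) h.contDiffOn_interior hz
    (spaceDir i)).unique ?_
  simpa [spaceDir] using h.hasDerivAt_space z.1 z.2 (Set.Ioo_subset_Icc_self hz.2) i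

lemma dirDeriv_spaceDir_spaceDir (h : IsPeriodicGraphFlow T u ut gu hu γ)
    {z : (Fin n → ℝ) × ℝ} (hz : z ∈ Set.univ ×ˢ Set.Ioo 0 T) (i j : Fin n) :
    dirDeriv (spaceDir i) (dirDeriv (spaceDir j) (fun z => u z.1 z.2)) z = hu z.1 z.2 i j := by
  have hΩ : IsOpen ((Set.univ : Set (Fin n → ℝ)) ×ˢ Set.Ioo 0 T) := isOpen_univ.prod isOpen_Ioo
  refine (hasDerivAt_line hΩ (h.contDiffOn_interior.dirDeriv hΩ (spaceDir j)) hz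
    (spaceDir i)).unique ?_
  refine (h.hasDerivAt_grad z.1 z.2 (Set.Ioo_subset_Icc_self hz.2) i j).congr_of_eventuallyEq
    (Eventually.of_forall fun s => ?_)
  simp only
  rw [h.dirDeriv_spaceDir]
  · simp [spaceDir]
  · simpa [spaceDir] using hz

lemma dirDeriv_timeDir (h : IsPeriodicGraphFlow T u ut gu hu γ) {z : (Fin n → ℝ) × ℝ}
    (hz : z ∈ Set.univ ×ˢ Set.Ioo 0 T) :
    dirDeriv timeDir (fun z => u z.1 z.2) z = ut z.1 z.2 := by
  refine (hasDerivAt_line (isOpen_univ.prod isOpen_Ioo) h.contDiffOn_interior hz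
    timeDir).unique ?_
  have hd := (h.hasDerivWithinAt_time z.1 z.2 (Set.Ioo_subset_Icc_self hz.2)).hasDerivAt
    (Icc_mem_nhds hz.2.1 hz.2.2)
  rw [← add_zero z.2] at hd
  simpa [timeDir] using hd.comp_const_add z.2 0

lemma gradSq_eq (h : IsPeriodicGraphFlow T u ut gu hu γ) {z : (Fin n → ℝ) × ℝ}
    (hz : z ∈ Set.univ ×ˢ Set.Ioo 0 T) :
    gradSq (fun z => u z.1 z.2) z = 1 + ∑ i, gu z.1 z.2 i ^ 2 := by
  simp only [gradSq, h.dirDeriv_spaceDir hz]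

lemma continuousOn_gradSq (h : IsPeriodicGraphFlow T u ut gu hu γ) (hT : 0 < T) :
    ContinuousOn (fun z : (Fin n → ℝ) × ℝ => 1 + ∑ i, gu z.1 z.2 i ^ 2)
      (Set.univ ×ˢ Set.Icc 0 T) := by
  set S : Set ((Fin n → ℝ) × ℝ) := Set.univ ×ˢ Set.Icc 0 T with hS
  have hud : UniqueDiffOn ℝ S := uniqueDiffOn_univ.prod (uniqueDiffOn_Icc hT)
  have hcont : ∀ i, ContinuousOn (fun z : (Fin n → ℝ) × ℝ => gu z.1 z.2 i) S := by
    intro i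
    refine ((h.contDiffOn.continuousOn_fderivWithin hud (by simp)).clm_apply
      (continuousOn_const (c := spaceDir i))).congr fun z hz => ?_
    have hl : HasDerivAt (fun s : ℝ => z + s • spaceDir i) (spaceDir i) 0 := by
      simpa using ((hasDerivAt_id (0 : ℝ)).smul_const (spaceDir i)).const_add z
    have hd := HasFDerivWithinAt.comp_hasDerivAt_of_eq (0 : ℝ)
      ((h.contDiffOn.differentiableOn (by simp)) z hz).hasFDerivWithinAt hl
      (Eventually.of_forall fun s => by simpa [hS, spaceDir] using hz) (by simp)
    refine (h.hasDerivAt_space z.1 z.2 hz.2 i).unique ?_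
    simpa [spaceDir, Function.comp_def] using hd
  fun_prop

lemma add_eq (h : IsPeriodicGraphFlow T u ut gu hu γ) {g : Fin n → ℝ}
    (hg : g ∈ AddSubgroup.closure (Set.range γ)) (x : Fin n → ℝ) (t : ℝ) :
    u (x + g) t = u x t :=
  add_eq_of_mem_closure (f := fun x => u x t) (by rintro _ ⟨k, rfl⟩ x; exact h.periodic k x t) hg x

lemma grad_add_eq (h : IsPeriodicGraphFlow T u ut gu hu γ) {g : Fin n → ℝ}
    (hg : g ∈ AddSubgroup.closure (Set.range γ)) (x : Fin n → ℝ) {t : ℝ}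
    (ht : t ∈ Set.Icc 0 T) : gu (x + g) t = gu x t := by
  ext i
  refine (h.hasDerivAt_space (x + g) t ht i).unique ?_
  simpa only [add_right_comm x g, h.add_eq hg] using h.hasDerivAt_space x t ht i

end IsPeriodicGraphFlow

lemma log_sub_log_sub_nonpos_iff {W t a : ℝ} (hW : 0 < W) (ht : 0 < t) :
    Real.log W - Real.log t - a / t ≤ 0 ↔ W ≤ t * Real.exp (a / t) := by
  rw [sub_sub, sub_nonpos, ← Real.log_exp (a / t), ← Real.log_mul ht.ne' (Real.exp_pos _).ne',
    Real.log_le_log_iff hW (by positivity), Real.log_exp]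

lemma pow_four_div_le_mul_exp {M w t : ℝ} (hM : 0 < M) (hw : M ≤ w) (ht : 0 < t) :
    M ^ 4 / (2 * t) ≤ t * Real.exp (w ^ 2 / t) := by
  have h1 := Real.quadratic_le_exp_of_nonneg (x := w ^ 2 / t) (by positivity)
  have h2 : 0 ≤ w ^ 2 / t := by positivity
  calc M ^ 4 / (2 * t) ≤ w ^ 4 / (2 * t) := by gcongr
    _ = t * ((w ^ 2 / t) ^ 2 / 2) := by field_simp
    _ ≤ _ := by gcongr; linarith

lemma max_principle_neg {M w t W : ℝ} (hM : 0 < M) (hw : M ≤ w) (ht : 0 < t) (htM : t ≤ M ^ 2 / 4)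
    (hW : 4 ≤ W) :
    -2 * w ^ 2 / t ^ 2 * (1 - 1 / W) - 1 / t + w ^ 2 / t ^ 2 + 2 / t * (1 - 1 / W) < 0 := by
  have hW' : 0 < 1 / W := by positivity
  have hW4 : 1 / W ≤ 1 / 4 := one_div_le_one_div_of_le (by norm_num) hW
  have hA : 0 ≤ w ^ 2 / t ^ 2 := by positivity
  have ht' : 0 < 1 / t := by positivity
  have hlt : 2 * (1 / t) < w ^ 2 / t ^ 2 := by
    have : w ^ 2 / t ^ 2 = w ^ 2 / t * (1 / t) := by field_simp
    rw [this]
    gcongr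
    rw [lt_div_iff₀ ht]
    nlinarith
  have e1 : -2 * w ^ 2 / t ^ 2 * (1 - 1 / W) = -2 * (w ^ 2 / t ^ 2 * (1 - 1 / W)) := by ring
  have e2 : 2 / t * (1 - 1 / W) = 2 * (1 / t * (1 - 1 / W)) := by ring
  have h1 : w ^ 2 / t ^ 2 * (3 / 4) ≤ w ^ 2 / t ^ 2 * (1 - 1 / W) := by gcongr; linarith
  have h2 : 1 / t * (1 - 1 / W) ≤ 1 / t * 1 := by gcongr; linarith
  rw [e1, e2]
  linarith

namespace IsPeriodicGraphFlow

variable {n : ℕ} {T : ℝ} {u ut : (Fin n → ℝ) → ℝ → ℝ} {gu : (Fin n → ℝ) → ℝ → Fin n → ℝ}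
  {hu : (Fin n → ℝ) → ℝ → Fin n → Fin n → ℝ} {γ : Fin n → Fin n → ℝ}

/-- A positive value of the logarithmic quotient cannot be a maximum over a time slab. -/
lemma false_of_max (h : IsPeriodicGraphFlow T u ut gu hu γ) {M : ℝ} (hM : 0 < M)
    {z : (Fin n → ℝ) × ℝ} (hz : z ∈ Set.univ ×ˢ Set.Ioo 0 T) (hbound : |u z.1 z.2| < M)
    (hz1 : z.2 ≤ M ^ 2 / 4) (hz2 : z.2 ≤ M ^ 4 / 8) {ε : ℝ} (hε : ε < z.2)
    (hpos : 0 < logQuot M (fun z => u z.1 z.2) z)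
    (hmax : ∀ y, ∀ t ∈ Set.Icc ε z.2,
      logQuot M (fun z => u z.1 z.2) (y, t) ≤ logQuot M (fun z => u z.1 z.2) z) : False := by
  have hΩ : IsOpen ((Set.univ : Set (Fin n → ℝ)) ×ˢ Set.Ioo 0 T) := isOpen_univ.prod isOpen_Ioo
  have hw : M ≤ 2 * M - u z.1 z.2 := by linarith [(abs_lt.1 hbound).2]
  have ht : 0 < z.2 := hz.2.1
  have key := le_of_logQuot_max hΩ h.contDiffOn_interior (fun z hz => hz.2.1) (fun y hy => by
      rw [h.dirDeriv_timeDir hy, h.flow y.1 y.2 (Set.Ioo_subset_Icc_self hy.2)]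
      simp only [h.dirDeriv_spaceDir hy, h.dirDeriv_spaceDir_spaceDir hy]) hz M
    (fun y => hmax y z.2 ⟨hε.le, le_rfl⟩) (by
      have : Set.Ioo (ε - z.2) 0 ∈ 𝓝[<] (0 : ℝ) := Ioo_mem_nhdsLT (by linarith)
      filter_upwards [this] with s hs
      have e : z + s • timeDir = (z.1, z.2 + s) := by ext <;> simp [timeDir]
      rw [e]
      exact hmax _ _ ⟨by linarith [hs.1], by linarith [hs.2]⟩)
  refine absurd key (not_le.2 (max_principle_neg hM hw ht hz1 ?_))
  have hW := mt (log_sub_log_sub_nonpos_iff (gradSq_pos (fun z => u z.1 z.2) z) ht).2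
    (not_le.2 hpos)
  refine le_trans ?_ ((pow_four_div_le_mul_exp hM hw ht).trans (not_le.1 hW).le)
  rw [le_div_iff₀ (by positivity)]
  linarith

lemma gradient_estimate (h : IsPeriodicGraphFlow T u ut gu hu γ) (hn : 1 ≤ n) (hT : 0 < T)
    {M : ℝ} (hM : 0 < M) (hbound : ∀ x, ∀ t ∈ Set.Icc 0 T, |u x t| < M)
    (x : Fin n → ℝ) {t : ℝ} (ht : 0 < t) (htT : t ≤ T) (ht1 : t ≤ M ^ 2 / 4)
    (ht2 : t ≤ M ^ 4 / 8) :
    1 + ∑ i, gu x t i ^ 2 ≤ t * Real.exp ((2 * M - u x t) ^ 2 / t) := by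
  have : Nonempty (Fin n) := ⟨⟨0, hn⟩⟩
  obtain ⟨K, hK, hKx⟩ := exists_isCompact_sub_mem_closure h.linearIndependent
  have hWc := h.continuousOn_gradSq hT
  have hW : ∀ x t, 0 < 1 + ∑ i, gu x t i ^ 2 := fun x t => one_add_sum_sq_pos _
  set Q : (Fin n → ℝ) × ℝ → ℝ := fun z =>
    Real.log (1 + ∑ i, gu z.1 z.2 i ^ 2) - Real.log z.2 - (2 * M - u z.1 z.2) ^ 2 / z.2 with hQ
  have hQc : ContinuousOn Q (Set.univ ×ˢ Set.Ioc 0 T) := by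
    have hsub : (Set.univ : Set (Fin n → ℝ)) ×ˢ Set.Ioc 0 T ⊆ Set.univ ×ˢ Set.Icc 0 T :=
      Set.prod_mono subset_rfl Set.Ioc_subset_Icc_self
    refine (((hWc.mono hsub).log fun z _ => (hW _ _).ne').sub
      (continuousOn_snd.log fun z hz => hz.2.1.ne')).sub ?_
    exact ((continuousOn_const.sub (h.contDiffOn.continuousOn.mono hsub)).pow 2).div
      continuousOn_snd fun z hz => hz.2.1.ne'
  have hQlog : ∀ z ∈ (Set.univ : Set (Fin n → ℝ)) ×ˢ Set.Ioo 0 T,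
      Q z = logQuot M (fun z => u z.1 z.2) z := fun z hz => by
    simp only [hQ, logQuot, h.gradSq_eq hz]
  have hper : ∀ x, ∃ y ∈ K, ∀ t ∈ Set.Icc 0 T,
      gu x t = gu y t ∧ u x t = u y t := by
    intro x
    obtain ⟨y, hy, hxy⟩ := hKx x
    refine ⟨y, hy, fun t ht => ?_⟩
    have e : x = y + (x - y) := by abel
    rw [e, h.grad_add_eq hxy y ht, h.add_eq hxy]
    exact ⟨rfl, rfl⟩
  obtain ⟨C, hC⟩ := ((hK.prod (isCompact_Icc (a := (0 : ℝ)) (b := T))).image_of_continuousOn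
    (hWc.mono (Set.prod_mono (Set.subset_univ K) subset_rfl))).bddAbove
  have hWC : ∀ x, ∀ t ∈ Set.Icc 0 T, 1 + ∑ i, gu x t i ^ 2 ≤ C := by
    intro x t ht
    obtain ⟨y, hy, hxy⟩ := hper x
    rw [(hxy t ht).1]
    exact hC ⟨(y, t), ⟨hy, ht⟩, rfl⟩
  have hC0 : 0 < C := (hW x t).trans_le (hWC x t ⟨ht.le, htT⟩)
  rw [← log_sub_log_sub_nonpos_iff (hW x t) ht]
  by_contra! hpos
  change 0 < Q (x, t) at hpos
  obtain ⟨t₀, ht₀, hQt₀⟩ : ∃ t₀ ∈ Set.Ioo 0 t, 0 < Q (x, t₀) := by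
    have hc : ContinuousOn (fun s => Q (x, s)) (Set.Ioc 0 T) :=
      hQc.comp (by fun_prop) fun s hs => ⟨Set.mem_univ _, hs⟩
    have h1 : ∀ᶠ s in 𝓝[Set.Ioo 0 t] t, 0 < Q (x, s) :=
      ((hc t ⟨ht, htT⟩).mono fun s hs => ⟨hs.1, hs.2.le.trans htT⟩).eventually_const_lt hpos
    have : (𝓝[Set.Ioo 0 t] t).NeBot := by
      rw [nhdsWithin_Ioo_eq_nhdsLT ht]
      infer_instance
    obtain ⟨s, hs, hs'⟩ := (h1.and self_mem_nhdsWithin).exists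
    exact ⟨s, hs', hs⟩
  have ht₀T : t₀ < T := ht₀.2.trans_le htT
  set ε := min (M ^ 4 / (2 * C)) (t₀ / 2) with hεdef
  have hε0 : 0 < ε := lt_min (by positivity) (half_pos ht₀.1)
  have hεt : ε < t₀ := (min_le_right _ _).trans_lt (half_lt_self ht₀.1)
  have hQε : ∀ y, Q (y, ε) ≤ 0 := by
    intro y
    have hεT : ε ∈ Set.Icc 0 T := ⟨hε0.le, (hεt.trans ht₀T).le⟩
    have hw : M ≤ 2 * M - u y ε := by linarith [(abs_lt.1 (hbound y ε hεT)).2]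
    refine (log_sub_log_sub_nonpos_iff (hW y ε) hε0).2 ((hWC y ε hεT).trans
      (le_trans ?_ (pow_four_div_le_mul_exp hM hw hε0)))
    have : ε ≤ M ^ 4 / (2 * C) := min_le_left _ _
    rw [le_div_iff₀ (by positivity)] at this ⊢
    linarith
  have hmaps : K ×ˢ Set.Icc ε t₀ ⊆ Set.univ ×ˢ Set.Ioc 0 T := fun z hz =>
    ⟨Set.mem_univ _, hε0.trans_le hz.2.1, hz.2.2.trans ht₀T.le⟩
  have hperQ : ∀ x, ∃ y ∈ K, ∀ t ∈ Set.Icc 0 T, Q (x, t) = Q (y, t) := by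
    intro x
    obtain ⟨y, hy, hxy⟩ := hper x
    exact ⟨y, hy, fun t ht => by simp only [hQ, hxy t ht]⟩
  obtain ⟨y₀, hy₀, hxy₀⟩ := hperQ x
  obtain ⟨z, hz, hzmax⟩ := (hK.prod isCompact_Icc).exists_isMaxOn
    ⟨(y₀, t₀), hy₀, hεt.le, le_rfl⟩ (hQc.mono hmaps)
  have hmax : ∀ y, ∀ s ∈ Set.Icc ε t₀, Q (y, s) ≤ Q z := by
    intro y s hs
    obtain ⟨y', hy', hyy'⟩ := hperQ y
    rw [hyy' s ⟨hε0.le.trans hs.1, hs.2.trans ht₀T.le⟩]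
    exact hzmax (show (y', s) ∈ K ×ˢ Set.Icc ε t₀ from ⟨hy', hs⟩)
  have hzpos : 0 < Q z := hQt₀.trans_le (hmax x t₀ ⟨hεt.le, le_rfl⟩)
  have hzε : ε < z.2 := lt_of_le_of_ne hz.2.1 fun he => by
    have := hQε z.1
    rw [he] at this
    exact absurd hzpos (not_lt.2 this)
  have hzΩ : z ∈ (Set.univ : Set (Fin n → ℝ)) ×ˢ Set.Ioo 0 T :=
    ⟨Set.mem_univ _, hε0.trans hzε, hz.2.2.trans_lt ht₀T⟩
  have hzt : z.2 ≤ t := hz.2.2.trans ht₀.2.le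
  refine h.false_of_max hM hzΩ (hbound _ _ (Set.Ioo_subset_Icc_self hzΩ.2)) (hzt.trans ht1)
    (hzt.trans ht2) hzε (hQlog z hzΩ ▸ hzpos) fun y s hs => ?_
  rw [← hQlog z hzΩ, ← hQlog (y, s) ⟨Set.mem_univ _, hε0.trans_le hs.1, hs.2.trans_lt hzΩ.2.2⟩]
  exact hmax y s ⟨hs.1, hs.2.trans hz.2.2⟩

end IsPeriodicGraphFlow

/-- Height-dependent gradient estimate for periodic entire
graphs moving by mean curvature flow, independent of the initial gradient. -/
theorem periodic_mcf_gradient_estimate :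
    ∀ M : ℝ, 0 < M →
    ∃ c T' : ℝ, 0 < c ∧ 0 < T' ∧
      ∀ (n : ℕ), 1 ≤ n → ∀ (T : ℝ), 0 < T →
      ∀ (u ut : (Fin n → ℝ) → ℝ → ℝ)
        (gu : (Fin n → ℝ) → ℝ → Fin n → ℝ)
        (hu : (Fin n → ℝ) → ℝ → Fin n → Fin n → ℝ),
      ContDiffOn ℝ (⊤ : ℕ∞) (fun z : (Fin n → ℝ) × ℝ => u z.1 z.2)
        (Set.univ ×ˢ Set.Icc 0 T) →
      (∀ x : Fin n → ℝ, ∀ t ∈ Set.Icc (0:ℝ) T,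
        HasDerivWithinAt (fun s => u x s) (ut x t) (Set.Icc 0 T) t) →
      (∀ x : Fin n → ℝ, ∀ t ∈ Set.Icc (0:ℝ) T, ∀ i,
        HasDerivAt (fun s : ℝ => u (x + s • (Pi.single i 1 : Fin n → ℝ)) t)
          (gu x t i) 0) →
      (∀ x : Fin n → ℝ, ∀ t ∈ Set.Icc (0:ℝ) T, ∀ i j,
        HasDerivAt (fun s : ℝ => gu (x + s • (Pi.single i 1 : Fin n → ℝ)) t j)
          (hu x t i j) 0) →
      -- graphical mean curvature flow
      (∀ x : Fin n → ℝ, ∀ t ∈ Set.Icc (0:ℝ) T,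
        ut x t = ∑ i, ∑ j,
          ((if i = j then (1:ℝ) else 0) -
            gu x t i * gu x t j / (1 + ∑ k, (gu x t k) ^ 2)) * hu x t i j) →
      -- periodicity with respect to a basis
      ∀ (γ : Fin n → Fin n → ℝ), LinearIndependent ℝ γ →
      (∀ k : Fin n, ∀ x : Fin n → ℝ, ∀ t : ℝ, u (x + γ k) t = u x t) →
      -- height bound
      (∀ x : Fin n → ℝ, ∀ t ∈ Set.Icc (0:ℝ) T, |u x t| < M) →
      ∀ x : Fin n → ℝ, ∀ t ∈ Set.Ioc (0:ℝ) (min T T'),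
        Real.sqrt (1 + ∑ i, (gu x t i) ^ 2) ≤
          Real.sqrt t * Real.exp (c * (|u x t| - 2 * M) ^ 2 / (4 * t)) := by
  intro M hM
  refine ⟨2, min (M ^ 2 / 4) (M ^ 4 / 8), two_pos, by positivity, ?_⟩
  intro n hn T hT u ut gu hu hcd htime hgrad hhess hflow γ hγ hper hbound x t ht
  have h : IsPeriodicGraphFlow T u ut gu hu γ := ⟨hcd, htime, hgrad, hhess, hflow, hγ, hper⟩
  obtain ⟨ht0, htmin⟩ := ht
  simp only [le_min_iff] at htmin
  obtain ⟨htT, ht1, ht2⟩ := htmin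
  have hle : 1 + ∑ i, gu x t i ^ 2 ≤ t * Real.exp ((|u x t| - 2 * M) ^ 2 / t) := by
    rcases abs_cases (u x t) with ⟨habs, _⟩ | ⟨habs, _⟩
    · have := h.gradient_estimate hn hT hM hbound x ht0 htT ht1 ht2
      rwa [habs, sub_sq_comm]
    · have := h.neg.gradient_estimate hn hT hM (by simpa using hbound) x ht0 htT ht1 ht2
      rw [habs, sub_sq_comm]
      simpa using this
  refine (Real.sqrt_le_sqrt hle).trans_eq ?_
  rw [Real.sqrt_mul ht0.le, Real.sqrt_eq_rpow (Real.exp _), ← Real.exp_mul]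
  congr 2
  field_simp
  ring
end

section
/- Let n ≥ 1 and let F̄ : ℝ^{n+1} → ℝ be positively homogeneous of degree one, positive on nonzero vectors, twice continuously differentiable on ℝ^{n+1} ∖ {0}, and have strictly convex unit ball. Let φ⁰, φ¹, …, φⁿ be a basis of ℝ^{n+1}. Then there exist constants A, P > 0 such that for every p in the linear span of {φ¹,…,φⁿ} with F̄(p) ≥ P one has F̄(p − φ⁰) · D²F̄|_{p−φ⁰}(p, p) ≥ A. -/
section HomogeneousHessian

variable {E : Type*} [NormedAddCommGroup E] [NormedSpace ℝ E] {F : E → ℝ}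

/-- The derivative of a positively one-homogeneous function is positively zero-homogeneous. -/
theorem fderiv_smul_of_posHomogeneous
    (hF : ∀ l : ℝ, 0 < l → ∀ ω, F (l • ω) = l * F ω) {l : ℝ} (hl : 0 < l) (ω : E) :
    fderiv ℝ F (l • ω) = fderiv ℝ F ω := by
  have hcomp : fderiv ℝ (fun x => F (l • x)) ω = l • fderiv ℝ F (l • ω) :=
    fderiv_comp_smul l
  have hscale : (fun x => F (l • x)) = l • F := funext fun x => hF l hl x
  rw [hscale, fderiv_const_smul_field] at hcomp
  exact (smul_right_injective _ hl.ne' hcomp).symm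

/-- The Hessian of a positively one-homogeneous function is homogeneous of degree `-1`. -/
theorem smul_fderiv_fderiv_smul_of_posHomogeneous
    (hF : ∀ l : ℝ, 0 < l → ∀ ω, F (l • ω) = l * F ω) {l : ℝ} (hl : 0 < l) (ω : E) :
    l • fderiv ℝ (fderiv ℝ F) (l • ω) = fderiv ℝ (fderiv ℝ F) ω := by
  have hcomp : fderiv ℝ (fun x => fderiv ℝ F (l • x)) ω = l • fderiv ℝ (fderiv ℝ F) (l • ω) :=
    fderiv_comp_smul l
  rw [← hcomp]
  congr 1
  exact funext fun x => fderiv_smul_of_posHomogeneous hF hl x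

/-- The Hessian of a positively one-homogeneous function annihilates the radial direction. -/
theorem fderiv_fderiv_apply_self_of_posHomogeneous
    (hF : ∀ l : ℝ, 0 < l → ∀ ω, F (l • ω) = l * F ω) {ω : E}
    (hd : DifferentiableAt ℝ (fderiv ℝ F) ω) :
    fderiv ℝ (fderiv ℝ F) ω ω = 0 := by
  have hray : HasDerivAt (fun l : ℝ => l • ω) ω 1 := by
    simpa using (hasDerivAt_id (1 : ℝ)).smul_const ω
  have hd' : HasFDerivAt (fderiv ℝ F) (fderiv ℝ (fderiv ℝ F) ω) ((1 : ℝ) • ω) := by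
    simpa using hd.hasFDerivAt
  have hconst : (fun l : ℝ => fderiv ℝ F (l • ω)) =ᶠ[nhds 1] fun _ => fderiv ℝ F ω := by
    filter_upwards [lt_mem_nhds (zero_lt_one' ℝ)] with l hl
    exact fderiv_smul_of_posHomogeneous hF hl ω
  exact (hd'.comp_hasDerivAt (1 : ℝ) hray).unique
    ((hasDerivAt_const (1 : ℝ) (fderiv ℝ F ω)).congr_of_eventuallyEq hconst)

/-- The Hessian quadratic form at `ω` of a positively one-homogeneous function only depends on the
direction modulo `ω`. -/
theorem fderiv_fderiv_add_self_of_posHomogeneous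
    (hF : ∀ l : ℝ, 0 < l → ∀ ω, F (l • ω) = l * F ω) {ω : E} (hC : ContDiffAt ℝ 2 F ω) (v : E) :
    fderiv ℝ (fderiv ℝ F) ω (ω + v) (ω + v) = fderiv ℝ (fderiv ℝ F) ω v v := by
  have hd : DifferentiableAt ℝ (fderiv ℝ F) ω :=
    (hC.fderiv_right (m := 1) (by norm_num)).differentiableAt (by norm_num)
  have hsymm : IsSymmSndFDerivAt ℝ F ω := hC.isSymmSndFDerivAt (by simp)
  have hrad := fderiv_fderiv_apply_self_of_posHomogeneous hF hd
  simp [map_add, hrad, hsymm.eq v ω]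

/-- A positively one-homogeneous function that is continuous away from the origin of a
finite-dimensional space is bounded by a multiple of the norm. -/
theorem exists_le_mul_norm_of_posHomogeneous [FiniteDimensional ℝ E]
    (hF : ∀ l : ℝ, 0 < l → ∀ ω, F (l • ω) = l * F ω) (hc : ContinuousOn F {0}ᶜ) :
    ∃ C : ℝ, 0 < C ∧ ∀ ω, F ω ≤ C * ‖ω‖ := by
  have hsub : Metric.sphere (0 : E) 1 ⊆ {0}ᶜ := fun x hx =>
    ne_zero_of_mem_unit_sphere ⟨x, hx⟩
  obtain ⟨C, hC⟩ := (isCompact_sphere (0 : E) 1).bddAbove_image (hc.mono hsub)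
  refine ⟨max C 1, by positivity, fun ω => ?_⟩
  rcases eq_or_ne ω 0 with rfl | hω
  · have hzero := hF 2 two_pos 0
    rw [smul_zero] at hzero
    rw [norm_zero, mul_zero]
    linarith
  · have hn : 0 < ‖ω‖ := norm_pos_iff.mpr hω
    have hunit : ‖ω‖⁻¹ • ω ∈ Metric.sphere (0 : E) 1 := by
      simp [norm_smul, hn.ne']
    have hle := (hC (Set.mem_image_of_mem F hunit)).trans (le_max_left C 1)
    rw [hF _ (inv_pos.mpr hn)] at hle
    rwa [inv_mul_le_iff₀ hn, mul_comm] at hle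

/-- For `v` outside the subspace `W`, the scale-invariant quantity `F ω * D²F ω (v, v)` is bounded
below on all `ω = p - v` with `p ∈ W` of norm at least one. -/
theorem exists_pos_le_mul_fderiv_fderiv_sub [FiniteDimensional ℝ E]
    (hF : ∀ l : ℝ, 0 < l → ∀ ω, F (l • ω) = l * F ω)
    (hpos : ∀ ω, ω ≠ 0 → 0 < F ω) (hC : ContDiffOn ℝ 2 F {0}ᶜ)
    (hconv : ∀ ω, ω ≠ 0 → ∀ r, (∀ c : ℝ, r ≠ c • ω) → 0 < fderiv ℝ (fderiv ℝ F) ω r r)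
    (W : Submodule ℝ E) {v : E} (hv : v ∉ W) :
    ∃ A : ℝ, 0 < A ∧ ∀ p ∈ W, 1 ≤ ‖p‖ →
      A ≤ F (p - v) * fderiv ℝ (fderiv ℝ F) (p - v) v v := by
  let G : E → ℝ := fun ω => F ω * fderiv ℝ (fderiv ℝ F) ω v v
  let K : Set (E × ℝ) := (Metric.sphere (0 : E) 1 ∩ W) ×ˢ Set.Icc 0 1
  have hK : IsCompact K :=
    ((isCompact_sphere (0 : E) 1).inter_right W.closed_of_finiteDimensional).prod isCompact_Icc
  have hoff : ∀ x ∈ K, ∀ c : ℝ, v ≠ c • (x.1 - x.2 • v) := by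
    rintro ⟨q, t⟩ ⟨⟨hq, hqW⟩, -⟩ c hvc
    have hrel : (1 + c * t) • v = c • q := by
      rw [smul_sub, smul_smul, eq_sub_iff_add_eq] at hvc
      rw [add_smul, one_smul, hvc]
    have hmem : (1 + c * t) • v ∈ W := hrel ▸ W.smul_mem c hqW
    have hcoef : 1 + c * t = 0 := by
      by_contra h
      exact hv ((W.smul_mem_iff h).mp hmem)
    rw [hcoef, zero_smul, eq_comm, smul_eq_zero] at hrel
    rcases hrel with rfl | rfl
    · simp at hcoef
    · simp at hq
  have hne : ∀ x ∈ K, x.1 - x.2 • v ≠ 0 := by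
    rintro ⟨q, t⟩ ⟨⟨hq, hqW⟩, -⟩ h
    have hqv : q = t • v := sub_eq_zero.mp h
    rcases eq_or_ne t 0 with rfl | ht
    · simp [hqv] at hq
    · exact hv ((W.smul_mem_iff ht).mp (hqv ▸ hqW))
  have hopen : IsOpen ({0}ᶜ : Set E) := isOpen_compl_singleton
  have hH : ContinuousOn (fderiv ℝ (fderiv ℝ F)) {0}ᶜ :=
    (hC.fderiv_of_isOpen (m := 1) hopen (by norm_num)).continuousOn_fderiv_of_isOpen hopen le_rfl
  have hG : ContinuousOn G {0}ᶜ :=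
    hC.continuousOn.mul ((hH.clm_apply continuousOn_const).clm_apply continuousOn_const)
  have hGK : ContinuousOn (fun x : E × ℝ => G (x.1 - x.2 • v)) K :=
    hG.comp (by fun_prop) hne
  obtain ⟨A, hA, hle⟩ := hK.exists_forall_le' hGK (a := 0) fun x hx =>
    mul_pos (hpos _ (hne x hx)) (hconv _ (hne x hx) v (hoff x hx))
  refine ⟨A, hA, fun p hp hp1 => ?_⟩
  have hn : 0 < ‖p‖⁻¹ := by positivity
  have hmem : (‖p‖⁻¹ • p, ‖p‖⁻¹) ∈ K := by
    refine ⟨⟨?_, W.smul_mem _ hp⟩, hn.le, inv_le_one_of_one_le₀ hp1⟩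
    simp [norm_smul, (inv_pos.mp hn).ne']
  have hbound := hle _ hmem
  simp only [G] at hbound
  rw [← smul_sub, hF _ hn, mul_comm _ (F _), mul_assoc] at hbound
  rw [← smul_fderiv_fderiv_smul_of_posHomogeneous hF hn (p - v)]
  exact hbound

end HomogeneousHessian


/-- Degeneracy control for anisotropic mean curvature flow:
for a positive, one-homogeneous `F̄` with strictly convex unit ball there are
`A, P > 0` with `F̄(p−φ⁰) · D²F̄|_{p−φ⁰}(p,p) ≥ A` whenever `p` lies in the span
of `φ¹,…,φⁿ` and `F̄(p) ≥ P`. -/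
theorem anisotropic_degeneracy_control
    (n : ℕ) (hn : 1 ≤ n)
    (F : (Fin (n + 1) → ℝ) → ℝ)
    (hF_hom : ∀ l : ℝ, 0 < l → ∀ ω : Fin (n + 1) → ℝ, F (l • ω) = l * F ω)
    (hF_pos : ∀ ω : Fin (n + 1) → ℝ, ω ≠ 0 → 0 < F ω)
    (hF_C2 : ContDiffOn ℝ 2 F {(0 : Fin (n + 1) → ℝ)}ᶜ)
    (hF_conv : ∀ ω : Fin (n + 1) → ℝ, ω ≠ 0 → ∀ r : Fin (n + 1) → ℝ,
      (∀ cc : ℝ, r ≠ cc • ω) → 0 < fderiv ℝ (fderiv ℝ F) ω r r)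
    (φ : Fin (n + 1) → (Fin (n + 1) → ℝ))
    (hφ_li : LinearIndependent ℝ φ)
    (hφ_span : Submodule.span ℝ (Set.range φ) = ⊤) :
    ∃ A P : ℝ, 0 < A ∧ 0 < P ∧
      ∀ p : Fin (n + 1) → ℝ,
        p ∈ Submodule.span ℝ (φ '' {i | i ≠ 0}) →
        P ≤ F p →
        A ≤ F (p - φ 0) * fderiv ℝ (fderiv ℝ F) (p - φ 0) p p := by
  have hφ0 : φ 0 ∉ Submodule.span ℝ (φ '' {i | i ≠ 0}) :=
    hφ_li.notMem_span_image (by simp)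
  obtain ⟨C, hC, hFC⟩ := exists_le_mul_norm_of_posHomogeneous hF_hom hF_C2.continuousOn
  obtain ⟨A, hA, hbound⟩ :=
    exists_pos_le_mul_fderiv_fderiv_sub hF_hom hF_pos hF_C2 hF_conv _ hφ0
  refine ⟨A, C, hA, hC, fun p hp hCp => ?_⟩
  have hp1 : 1 ≤ ‖p‖ := le_of_mul_le_mul_left (by simpa using hCp.trans (hFC p)) hC
  have hne : p - φ 0 ≠ 0 := fun h => hφ0 (sub_eq_zero.mp h ▸ hp)
  have hinv := fderiv_fderiv_add_self_of_posHomogeneous hF_hom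
    (hF_C2.contDiffAt (isOpen_compl_singleton.mem_nhds hne)) (φ 0)
  rw [sub_add_cancel] at hinv
  rw [hinv]
  exact hbound p hp hp1
end

section
/- Let n ≥ 1, let e₀, e₁, …, eₙ be the standard basis of ℝ^{n+1}, and let H = {x ∈ ℝ^{n+1} : x₀ = 0} be the coordinate hyperplane spanned by e₁,…,eₙ. Let F̄ : ℝ^{n+1} → ℝ be positively homogeneous of degree one, positive on nonzero vectors, twice continuously differentiable on ℝ^{n+1} ∖ {0}, and have strictly convex unit ball. Then there exist constants A₀, P > 0 such that for all p, v ∈ H with F̄(p) ≥ P one has |p|⁴ · F̄(p − e₀) · D²F̄|_{p−e₀}(v, v) ≥ A₀ · ⟨v, p⟩², where |·| and ⟨·,·⟩ are the Euclidean norm and inner product on ℝ^{n+1}. -/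
/-- The derivative of a positively one-homogeneous function is positively zero-homogeneous. -/
theorem fderiv_smul_of_homogeneous {E : Type*} [NormedAddCommGroup E] [NormedSpace ℝ E]
    {F : E → ℝ} (hF : ∀ l : ℝ, 0 < l → ∀ x, F (l • x) = l * F x) {l : ℝ} (hl : 0 < l) (x : E) :
    fderiv ℝ F (l • x) = fderiv ℝ F x := by
  have h1 := fderiv_comp_smul (𝕜 := ℝ) (f := F) (x := x) l
  have h2 : (fun y => F (l • y)) = l • F := by
    ext y
    simp [hF l hl]
  rw [h2, fderiv_const_smul_field] at h1
  exact (smul_right_injective _ hl.ne' h1).symm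

/-- The second derivative of a positively one-homogeneous function has degree `-1`. -/
theorem smul_fderiv_fderiv_smul_of_homogeneous {E : Type*} [NormedAddCommGroup E]
    [NormedSpace ℝ E] {F : E → ℝ} (hF : ∀ l : ℝ, 0 < l → ∀ x, F (l • x) = l * F x)
    {l : ℝ} (hl : 0 < l) (x : E) :
    l • fderiv ℝ (fderiv ℝ F) (l • x) = fderiv ℝ (fderiv ℝ F) x := by
  have h1 := fderiv_comp_smul (𝕜 := ℝ) (f := fderiv ℝ F) (x := x) l
  have h2 : (fun y => fderiv ℝ F (l • y)) = fderiv ℝ F :=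
    funext fun y => fderiv_smul_of_homogeneous hF hl y
  rw [← h1, h2]

/-- Euler's relation: the radial direction is in the kernel of the second derivative. -/
theorem fderiv_fderiv_apply_self_of_homogeneous {E : Type*} [NormedAddCommGroup E]
    [NormedSpace ℝ E] {F : E → ℝ} (hF : ∀ l : ℝ, 0 < l → ∀ x, F (l • x) = l * F x)
    {x : E} (hd : DifferentiableAt ℝ (fderiv ℝ F) x) :
    fderiv ℝ (fderiv ℝ F) x x = 0 := by
  have hs : HasDerivAt (fun t : ℝ => t • x) x 1 := by
    simpa using (hasDerivAt_id (1 : ℝ)).smul_const x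
  have h1 : HasDerivAt (fun t : ℝ => fderiv ℝ F (t • x)) (fderiv ℝ (fderiv ℝ F) x x) 1 :=
    HasFDerivAt.comp_hasDerivAt (1 : ℝ) (by simpa using hd.hasFDerivAt) hs
  have h2 : (fun t : ℝ => fderiv ℝ F (t • x)) =ᶠ[nhds 1] fun _ => fderiv ℝ F x := by
    filter_upwards [lt_mem_nhds (zero_lt_one' ℝ)] with t ht
    exact fderiv_smul_of_homogeneous hF ht x
  exact h1.unique ((hasDerivAt_const (1 : ℝ) (fderiv ℝ F x)).congr_of_eventuallyEq h2)

theorem isCompact_setOf_dotProduct_self_eq_one (ι : Type*) [Fintype ι] :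
    IsCompact {u : ι → ℝ | u ⬝ᵥ u = 1} := by
  refine Metric.isCompact_of_isClosed_isBounded
    (isClosed_eq (by unfold dotProduct; fun_prop) continuous_const) ?_
  refine (Metric.isBounded_closedBall (x := (0 : ι → ℝ)) (r := 1)).subset fun u hu => ?_
  rw [mem_closedBall_zero_iff, pi_norm_le_iff_of_nonneg zero_le_one]
  intro i
  rw [Real.norm_eq_abs, ← sq_le_one_iff_abs_le_one, sq]
  exact (Finset.single_le_sum (f := fun i => u i * u i)
    (fun i _ => mul_self_nonneg (u i)) (Finset.mem_univ i)).trans_eq hu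

theorem dotProduct_self_pos_of_ne_zero {ι : Type*} [Fintype ι] {x : ι → ℝ} (hx : x ≠ 0) :
    0 < x ⬝ᵥ x :=
  lt_of_le_of_ne (Finset.sum_nonneg fun i _ => mul_self_nonneg (x i))
    (fun h => hx (dotProduct_self_eq_zero.1 h.symm))

/-- Normalization to the Euclidean unit sphere. -/
theorem dotProduct_self_inv_sqrt_smul {ι : Type*} [Fintype ι] {x : ι → ℝ} (hx : x ≠ 0) :
    ((√(x ⬝ᵥ x))⁻¹ • x) ⬝ᵥ ((√(x ⬝ᵥ x))⁻¹ • x) = 1 := by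
  have hp : 0 < x ⬝ᵥ x := dotProduct_self_pos_of_ne_zero hx
  have hs := Real.sqrt_pos.2 hp
  have hq := Real.mul_self_sqrt hp.le
  rw [smul_dotProduct, dotProduct_smul, smul_eq_mul, smul_eq_mul]
  field_simp
  linarith

/-- Uniform convexity transverse to the radial direction: `F · D²F` at `ω` dominates the squared
Euclidean norm of the component orthogonal to `ω`. -/
theorem exists_pos_mul_orthogonal_part_le {ι : Type*} [Fintype ι] {F : (ι → ℝ) → ℝ}
    (hF_hom : ∀ l : ℝ, 0 < l → ∀ ω, F (l • ω) = l * F ω)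
    (hF_pos : ∀ ω, ω ≠ 0 → 0 < F ω)
    (hF_C2 : ContDiffOn ℝ 2 F {(0 : ι → ℝ)}ᶜ)
    (hF_conv : ∀ ω, ω ≠ 0 → ∀ r : ι → ℝ,
      (∀ c : ℝ, r ≠ c • ω) → 0 < fderiv ℝ (fderiv ℝ F) ω r r) :
    ∃ m : ℝ, 0 < m ∧ ∀ ω v : ι → ℝ, ω ≠ 0 →
      m * (v ⬝ᵥ v - (v ⬝ᵥ ω) ^ 2 / (ω ⬝ᵥ ω)) ≤ F ω * fderiv ℝ (fderiv ℝ F) ω v v := by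
  have hC1 : ContDiffOn ℝ 1 (fderiv ℝ F) {(0 : ι → ℝ)}ᶜ :=
    hF_C2.fderiv_of_isOpen isOpen_compl_singleton (by norm_num)
  have hC0 : ContinuousOn (fderiv ℝ (fderiv ℝ F)) {(0 : ι → ℝ)}ᶜ :=
    hC1.continuousOn_fderiv_of_isOpen isOpen_compl_singleton le_rfl
  have hne : ∀ u : ι → ℝ, u ⬝ᵥ u = 1 → u ≠ 0 := by
    rintro u hu rfl
    simp at hu
  let S := {u : ι → ℝ | u ⬝ᵥ u = 1}
  have hK : IsCompact ((S ×ˢ S) ∩ {x : (ι → ℝ) × (ι → ℝ) | x.1 ⬝ᵥ x.2 = 0}) :=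
    ((isCompact_setOf_dotProduct_self_eq_one ι).prod
      (isCompact_setOf_dotProduct_self_eq_one ι)).inter_right
      (isClosed_eq (by unfold dotProduct; fun_prop) continuous_const)
  obtain ⟨m, hm, hmin⟩ := hK.exists_forall_le' (a := (0 : ℝ))
    (f := fun x => F x.1 * fderiv ℝ (fderiv ℝ F) x.1 x.2 x.2) (by
      have hmap : Set.MapsTo Prod.fst
          ((S ×ˢ S) ∩ {x : (ι → ℝ) × (ι → ℝ) | x.1 ⬝ᵥ x.2 = 0}) {(0 : ι → ℝ)}ᶜ :=
        fun x hx => hne _ hx.1.1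
      exact (hF_C2.continuousOn.comp continuousOn_fst hmap).mul
        (((hC0.comp continuousOn_fst hmap).clm_apply continuousOn_snd).clm_apply
          continuousOn_snd))
    (by
      rintro ⟨u, w⟩ ⟨⟨hu, hw⟩, huw⟩
      simp only [S, Set.mem_ofPred_eq] at hu hw huw
      refine mul_pos (hF_pos _ (hne _ hu)) (hF_conv _ (hne _ hu) _ fun c hc => ?_)
      change w = c • u at hc
      rw [hc, dotProduct_smul, hu] at huw
      exact hne w hw (by simp_all))
  refine ⟨m, hm, fun ω v hω => ?_⟩
  have hωω : 0 < ω ⬝ᵥ ω := dotProduct_self_pos_of_ne_zero hω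
  have hnhds : {(0 : ι → ℝ)}ᶜ ∈ nhds ω := isOpen_compl_singleton.mem_nhds hω
  have hker : fderiv ℝ (fderiv ℝ F) ω ω = 0 :=
    fderiv_fderiv_apply_self_of_homogeneous hF_hom
      ((hC1.contDiffAt hnhds).differentiableAt (by norm_num))
  have hsymm : ∀ r, fderiv ℝ (fderiv ℝ F) ω r ω = 0 := fun r => by
    rw [((hF_C2.contDiffAt hnhds).isSymmSndFDerivAt (by simp)).eq r ω, hker]
    rfl
  set c := v ⬝ᵥ ω / (ω ⬝ᵥ ω) with hc
  obtain ⟨w, hw⟩ : ∃ w, w = v - c • ω := ⟨_, rfl⟩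
  have hBw : fderiv ℝ (fderiv ℝ F) ω w w = fderiv ℝ (fderiv ℝ F) ω v v := by
    simp [hw, hker, hsymm]
  have horth : ω ⬝ᵥ w = 0 := by
    rw [hw, dotProduct_sub, dotProduct_smul, smul_eq_mul, hc, dotProduct_comm ω v]
    field_simp
    ring
  have hww : w ⬝ᵥ w = v ⬝ᵥ v - (v ⬝ᵥ ω) ^ 2 / (ω ⬝ᵥ ω) := by
    conv_lhs => rw [hw]
    simp only [dotProduct_sub, sub_dotProduct, dotProduct_smul, smul_dotProduct, smul_eq_mul,
      dotProduct_comm ω v, hc]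
    field_simp
    ring
  rw [← hww, ← hBw]
  by_cases hw0 : w = 0
  · simp [hw0]
  have hwp : 0 < w ⬝ᵥ w := dotProduct_self_pos_of_ne_zero hw0
  have hs : 0 < (√(ω ⬝ᵥ ω))⁻¹ := inv_pos.2 (Real.sqrt_pos.2 hωω)
  have hinv : (√(w ⬝ᵥ w))⁻¹ * (√(w ⬝ᵥ w))⁻¹ = (w ⬝ᵥ w)⁻¹ := by
    rw [← mul_inv, Real.mul_self_sqrt hwp.le]
  have hkey := hmin ((√(ω ⬝ᵥ ω))⁻¹ • ω, (√(w ⬝ᵥ w))⁻¹ • w)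
    ⟨⟨dotProduct_self_inv_sqrt_smul hω, dotProduct_self_inv_sqrt_smul hw0⟩, by
      simp [horth]⟩
  have hB := smul_fderiv_fderiv_smul_of_homogeneous hF_hom hs ω
  dsimp only at hkey
  rw [hF_hom _ hs] at hkey
  have heq : (√(ω ⬝ᵥ ω))⁻¹ * F ω * fderiv ℝ (fderiv ℝ F) ((√(ω ⬝ᵥ ω))⁻¹ • ω)
      ((√(w ⬝ᵥ w))⁻¹ • w) ((√(w ⬝ᵥ w))⁻¹ • w) =
      F ω * fderiv ℝ (fderiv ℝ F) ω w w / (w ⬝ᵥ w) := by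
    rw [← hB]
    simp only [map_smul, smul_apply, smul_eq_mul]
    rw [div_eq_mul_inv, ← hinv]
    ring
  rw [heq, le_div_iff₀ hwp] at hkey
  exact hkey

/-- A positively one-homogeneous continuous function is bounded by a multiple of the
Euclidean norm. -/
theorem exists_pos_le_mul_sqrt_of_homogeneous {ι : Type*} [Fintype ι] {F : (ι → ℝ) → ℝ}
    (hF_hom : ∀ l : ℝ, 0 < l → ∀ ω, F (l • ω) = l * F ω)
    (hF_cont : ContinuousOn F {(0 : ι → ℝ)}ᶜ) :
    ∃ C : ℝ, 0 < C ∧ ∀ p : ι → ℝ, F p ≤ C * √(p ⬝ᵥ p) := by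
  obtain ⟨C, hC⟩ := (isCompact_setOf_dotProduct_self_eq_one ι).bddAbove_image
    (hF_cont.mono (by
      rintro u hu rfl
      simp at hu))
  refine ⟨max C 1, by positivity, fun p => ?_⟩
  by_cases hp : p = 0
  · have := hF_hom 2 two_pos 0
    rw [smul_zero] at this
    simp only [hp, dotProduct_zero, Real.sqrt_zero, mul_zero]
    linarith
  have hpp : 0 < √(p ⬝ᵥ p) := Real.sqrt_pos.2 <| dotProduct_self_pos_of_ne_zero hp
  have h := hC (Set.mem_image_of_mem F (dotProduct_self_inv_sqrt_smul hp))
  rw [hF_hom _ (inv_pos.2 hpp), inv_mul_le_iff₀ hpp, mul_comm] at h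
  exact h.trans (mul_le_mul_of_nonneg_right (le_max_left _ _) hpp.le)


/-- Coercivity of the anisotropic operator along the
hyperplane: there are `A₀, P > 0` with
`|p|⁴ · F̄(p−e₀) · D²F̄|_{p−e₀}(v,v) ≥ A₀ ⟨v,p⟩²` for all `p, v` in the
coordinate hyperplane with `F̄(p) ≥ P`. -/
theorem anisotropic_coercivity_hyperplane
    (n : ℕ) (hn : 1 ≤ n)
    (F : (Fin (n + 1) → ℝ) → ℝ)
    (hF_hom : ∀ l : ℝ, 0 < l → ∀ ω : Fin (n + 1) → ℝ, F (l • ω) = l * F ω)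
    (hF_pos : ∀ ω : Fin (n + 1) → ℝ, ω ≠ 0 → 0 < F ω)
    (hF_C2 : ContDiffOn ℝ 2 F {(0 : Fin (n + 1) → ℝ)}ᶜ)
    (hF_conv : ∀ ω : Fin (n + 1) → ℝ, ω ≠ 0 → ∀ r : Fin (n + 1) → ℝ,
      (∀ cc : ℝ, r ≠ cc • ω) → 0 < fderiv ℝ (fderiv ℝ F) ω r r) :
    ∃ A₀ P : ℝ, 0 < A₀ ∧ 0 < P ∧
      ∀ p v : Fin (n + 1) → ℝ,
        p 0 = 0 → v 0 = 0 → P ≤ F p →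
        A₀ * (∑ i, v i * p i) ^ 2 ≤
          (∑ i, p i ^ 2) ^ 2 *
            (F (p - (Pi.single 0 1 : Fin (n + 1) → ℝ)) *
              fderiv ℝ (fderiv ℝ F) (p - (Pi.single 0 1 : Fin (n + 1) → ℝ)) v v) := by
  obtain ⟨m, hm, hcoer⟩ := exists_pos_mul_orthogonal_part_le hF_hom hF_pos hF_C2 hF_conv
  obtain ⟨C, hC, hbound⟩ := exists_pos_le_mul_sqrt_of_homogeneous hF_hom hF_C2.continuousOn
  refine ⟨m / 2, C, by positivity, hC, fun p v hp hv hP => ?_⟩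
  set e : Fin (n + 1) → ℝ := Pi.single 0 1 with he
  have hp1 : 1 ≤ p ⬝ᵥ p := by
    have h := hP.trans (hbound p)
    rw [le_mul_iff_one_le_right hC] at h
    simpa using h
  have hvq : v ⬝ᵥ (p - e) = v ⬝ᵥ p := by simp [he, dotProduct_sub, hv]
  have hqq : (p - e) ⬝ᵥ (p - e) = p ⬝ᵥ p + 1 := by
    simp [he, dotProduct_sub, sub_dotProduct, hp]
  have hq : p - e ≠ 0 := by
    intro h
    rw [h, dotProduct_zero] at hqq
    linarith
  have hmain := hcoer (p - e) v hq
  rw [hvq, hqq] at hmain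
  have hcs : (v ⬝ᵥ p) ^ 2 ≤ (v ⬝ᵥ v) * (p ⬝ᵥ p) := by
    simpa only [dotProduct, sq] using Finset.sum_mul_sq_le_sq_mul_sq Finset.univ v p
  have hsum : ∑ i, p i ^ 2 = p ⬝ᵥ p := by simp only [dotProduct, sq]
  rw [hsum]
  change m / 2 * (v ⬝ᵥ p) ^ 2 ≤ _
  refine le_trans ?_ (mul_le_mul_of_nonneg_left hmain (sq_nonneg _))
  generalize p ⬝ᵥ p = a at *
  generalize v ⬝ᵥ p = b at *
  generalize v ⬝ᵥ v = d at *
  have ha : 0 < a + 1 := by linarith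
  have hkey : b ^ 2 / 2 ≤ a ^ 2 * (d - b ^ 2 / (a + 1)) := by
    have h1 : a * b ^ 2 ≤ a ^ 2 * d := by nlinarith
    have h2 : a * b ^ 2 - a ^ 2 * (b ^ 2 / (a + 1)) = b ^ 2 * (a / (a + 1)) := by
      field_simp
      ring
    have h3 : 1 / 2 ≤ a / (a + 1) := by
      rw [div_le_div_iff₀ two_pos ha]
      linarith
    nlinarith [mul_le_mul_of_nonneg_left h3 (sq_nonneg b)]
  nlinarith [mul_le_mul_of_nonneg_left hkey hm.le]
end
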